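/- arXiv:2009.08848 — 11 statements merged into one kernel-verified Lean document; each statement's English description precedes it below -/
import Mathlib

section
/- Let β : ℕ₀ → [0,1] be nonincreasing with β(0) = 1 and suppose Σ_{k=0}^∞ k^{α−1}·β(k) < ∞ for some α > 1. Then φ(x) := x^{α/(α−1)} satisfies the compatibility conditions (φ(0)=0; φ convex and differentiable with c₀ := sup_{y>0} φ'(y)y/φ(y) < ∞; y ↦ y/φ(y) convex and decreasing on (0,∞); Σ_{k=0}^∞ (φ*(k+1)−φ*(k))·β(k) < ∞), and the associated rate function satisfies Λ^mix(x) ≤ c_α·(x^{α/(α+1)} ∨ x) for all x > 0, where c_α > 0 depends only on α. -/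
/-- Convex conjugate `φ*(y) = sup_{x>0} (x·y − φ x)`. -/
noncomputable def phiConj (φ : ℝ → ℝ) (y : ℝ) : ℝ :=
  sSup {z : ℝ | ∃ x > 0, z = x * y - φ x}

/-- `ψ(x) = φ*(x)·x`. -/
noncomputable def psiOf (φ : ℝ → ℝ) (x : ℝ) : ℝ := phiConj φ x * x

/-- Generalised inverse `ψ⁻¹(y) = sup{x ≥ 0 : ψ x ≤ y}`. -/
noncomputable def psiInv (φ : ℝ → ℝ) (y : ℝ) : ℝ :=
  sSup {x : ℝ | 0 ≤ x ∧ psiOf φ x ≤ y}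

/-- The mixing rate function `Λ^mix(x) = ⌈ψ⁻¹(x⁻¹)⌉·x`. -/
noncomputable def lambdaMix (φ : ℝ → ℝ) (x : ℝ) : ℝ :=
  (⌈psiInv φ x⁻¹⌉₊ : ℝ) * x

/-!
Let `p` and `q` be conjugate exponents and `φ x = x ^ p`. Young's inequality for `x * (y / p)` gives
`φ* y = (p - 1) * (y / p) ^ q`, the supremum being attained at `x = (y / p) ^ (q - 1)`. Hence the
increments `φ* (k + 1) - φ* k` are of order `k ^ (q - 1)`, which is the weight in the assumed
series. Moreover `ψ x = p * (p - 1) * (x / p) ^ (q + 1)` can be inverted explicitly, so that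
`ψ⁻¹ x⁻¹ * x` is a constant multiple of `x ^ (q / (q + 1))`; rounding `ψ⁻¹ x⁻¹` up costs at most a
further `x`.
-/

open Asymptotics Filter Set

theorem convexOn_exp_comp {E : Type*} [AddCommMonoid E] [SMul ℝ E] {s : Set E} {f : E → ℝ}
    (hf : ConvexOn ℝ s f) : ConvexOn ℝ s (fun x => Real.exp (f x)) :=
  ⟨hf.1, fun _ hx _ hy _ _ ha hb hab =>
    (Real.exp_le_exp.2 (hf.2 hx hy ha hb hab)).trans
      (convexOn_exp.2 (mem_univ _) (mem_univ _) ha hb hab)⟩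

theorem convexOn_rpow_of_nonpos {r : ℝ} (hr : r ≤ 0) :
    ConvexOn ℝ (Ioi 0) (fun x : ℝ => x ^ r) := by
  have hlog : ConvexOn ℝ (Ioi 0) (fun x => Real.log x * r) := by
    simpa only [smul_eq_mul, neg_mul_neg, mul_comm, Pi.neg_apply] using
      strictConcaveOn_log_Ioi.concaveOn.neg.smul (neg_nonneg.2 hr)
  exact (convexOn_exp_comp hlog).congr fun x hx => (Real.rpow_def_of_pos hx r).symm

theorem rpow_one_sub_eqOn_div_rpow (p : ℝ) :
    EqOn (fun y : ℝ => y ^ (1 - p)) (fun y => y / y ^ p) (Ioi 0) := fun y hy => by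
  simp only [Real.rpow_sub hy, Real.rpow_one]

theorem convexOn_div_rpow {p : ℝ} (hp : 1 ≤ p) : ConvexOn ℝ (Ioi 0) (fun y : ℝ => y / y ^ p) :=
  (convexOn_rpow_of_nonpos (sub_nonpos.2 hp)).congr (rpow_one_sub_eqOn_div_rpow p)

theorem antitoneOn_div_rpow {p : ℝ} (hp : 1 ≤ p) : AntitoneOn (fun y : ℝ => y / y ^ p) (Ioi 0) :=
  (Real.antitoneOn_rpow_Ioi_of_exponent_nonpos (sub_nonpos.2 hp)).congr
    (rpow_one_sub_eqOn_div_rpow p)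

theorem deriv_rpow_const_mul_self (p : ℝ) {y : ℝ} (hy : y ≠ 0) :
    deriv (fun x : ℝ => x ^ p) y * y = p * y ^ p := by
  rw [Real.deriv_rpow_const, mul_assoc, ← Real.rpow_add_one hy, sub_add_cancel]

theorem rpow_add_one_sub_rpow_le {q x : ℝ} (hq : 1 ≤ q) (hx : 0 ≤ x) :
    (x + 1) ^ q - x ^ q ≤ q * (x + 1) ^ (q - 1) := by
  have hderiv : HasDerivAt (fun t : ℝ => t ^ q) (q * (x + 1) ^ (q - 1)) (x + 1) :=
    Real.hasDerivAt_rpow_const (Or.inr hq)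
  simpa [slope_def_field] using
    (convexOn_rpow hq).slope_le_of_hasDerivAt hx (mem_Ici.2 (by positivity)) (lt_add_one x) hderiv

theorem isBigO_rpow_add_one_sub_rpow {q : ℝ} (hq : 1 ≤ q) :
    (fun x : ℝ => (x + 1) ^ q - x ^ q) =O[atTop] (fun x => x ^ (q - 1)) := by
  refine IsBigO.of_bound (q * 2 ^ (q - 1)) ?_
  filter_upwards [eventually_ge_atTop 1] with x hx
  have hincr : 0 ≤ (x + 1) ^ q - x ^ q :=
    sub_nonneg.2 (Real.rpow_le_rpow (by positivity) (by linarith) (by positivity))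
  rw [Real.norm_of_nonneg hincr, Real.norm_of_nonneg (by positivity)]
  calc (x + 1) ^ q - x ^ q
      ≤ q * (x + 1) ^ (q - 1) := rpow_add_one_sub_rpow_le hq (by positivity)
    _ ≤ q * (2 * x) ^ (q - 1) := by
        gcongr
        linarith
    _ = q * 2 ^ (q - 1) * x ^ (q - 1) := by
        rw [Real.mul_rpow zero_le_two (by positivity), mul_assoc]

theorem psiInv_nonneg (φ : ℝ → ℝ) (y : ℝ) : 0 ≤ psiInv φ y :=
  Real.sSup_nonneg fun _ hx => hx.1

theorem lambdaMix_le_psiInv_mul_add (φ : ℝ → ℝ) {x : ℝ} (hx : 0 ≤ x) :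
    lambdaMix φ x ≤ psiInv φ x⁻¹ * x + x :=
  calc lambdaMix φ x
      ≤ (psiInv φ x⁻¹ + 1) * x :=
        mul_le_mul_of_nonneg_right (Nat.ceil_lt_add_one (psiInv_nonneg φ _)).le hx
    _ = psiInv φ x⁻¹ * x + x := add_one_mul _ _

section HolderConjugate

variable {p q : ℝ}

theorem mul_sub_rpow_le (hpq : p.HolderConjugate q) {x y : ℝ} (hx : 0 ≤ x) (hy : 0 ≤ y) :
    x * y - x ^ p ≤ (p - 1) * (y / p) ^ q := by
  have hp : 0 < p := hpq.pos
  have hyoung : x * (y / p) ≤ x ^ p / p + (y / p) ^ q / q :=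
    Real.young_inequality_of_nonneg hx (by positivity) hpq
  calc x * y - x ^ p
      = p * (x * (y / p)) - x ^ p := by field_simp
    _ ≤ p * (x ^ p / p + (y / p) ^ q / q) - x ^ p := by gcongr
    _ = p / q * (y / p) ^ q := by field_simp; ring
    _ = (p - 1) * (y / p) ^ q := by rw [hpq.div_conj_eq_sub_one]

theorem mul_sub_rpow_argmax (hpq : p.HolderConjugate q) {y : ℝ} (hy : 0 < y) :
    (y / p) ^ (q - 1) * y - ((y / p) ^ (q - 1)) ^ p = (p - 1) * (y / p) ^ q := by
  have hp : 0 < p := hpq.pos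
  have hlinear : (y / p) ^ (q - 1) * y = p * (y / p) ^ q := by
    rw [Real.rpow_sub_one (by positivity)]
    field_simp
  have hpower : ((y / p) ^ (q - 1)) ^ p = (y / p) ^ q := by
    rw [← Real.rpow_mul (by positivity), hpq.symm.sub_one_mul_conj]
  rw [hlinear, hpower, sub_one_mul]

theorem phiConj_rpow (hpq : p.HolderConjugate q) {y : ℝ} (hy : 0 < y) :
    phiConj (fun x => x ^ p) y = (p - 1) * (y / p) ^ q := by
  have hmax : IsGreatest {z | ∃ x > 0, z = x * y - x ^ p} ((p - 1) * (y / p) ^ q) := by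
    refine ⟨⟨(y / p) ^ (q - 1), ?_, (mul_sub_rpow_argmax hpq hy).symm⟩, ?_⟩
    · exact Real.rpow_pos_of_pos (div_pos hy hpq.pos) _
    · rintro _ ⟨x, hx, rfl⟩
      exact mul_sub_rpow_le hpq hx.le hy.le
  exact hmax.csSup_eq

theorem isBigO_phiConj_rpow_add_one_sub (hpq : p.HolderConjugate q) :
    (fun y => phiConj (fun x => x ^ p) (y + 1) - phiConj (fun x => x ^ p) y)
      =O[atTop] (fun y : ℝ => y ^ (q - 1)) := by
  refine ((isBigO_rpow_add_one_sub_rpow hpq.symm.lt.le).const_mul_left ((p - 1) / p ^ q)).congr'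
    ?_ EventuallyEq.rfl
  filter_upwards [eventually_gt_atTop 0] with y hy
  rw [phiConj_rpow hpq hy, phiConj_rpow hpq (by positivity), Real.div_rpow hy.le hpq.nonneg,
    Real.div_rpow (by positivity) hpq.nonneg]
  ring

theorem summable_phiConj_rpow_add_one_sub_mul (hpq : p.HolderConjugate q) {β : ℕ → ℝ}
    (hβ : Summable fun k : ℕ => (k : ℝ) ^ (q - 1) * β k) :
    Summable fun k : ℕ =>
      (phiConj (fun x => x ^ p) ((k : ℝ) + 1) - phiConj (fun x => x ^ p) (k : ℝ)) * β k :=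
  summable_of_isBigO_nat hβ <|
    ((isBigO_phiConj_rpow_add_one_sub hpq).comp_tendsto tendsto_natCast_atTop_atTop).mul
      (isBigO_refl β atTop)

theorem psiOf_rpow (hpq : p.HolderConjugate q) {x : ℝ} (hx : 0 ≤ x) :
    psiOf (fun x => x ^ p) x = p * (p - 1) * (x / p) ^ (q + 1) := by
  have hp : 0 < p := hpq.pos
  have hq : 0 < q := hpq.symm.pos
  rcases hx.eq_or_lt with rfl | hx
  · rw [psiOf, mul_zero, zero_div, Real.zero_rpow (by positivity), mul_zero]
  · rw [psiOf, phiConj_rpow hpq hx, Real.rpow_add_one (by positivity)]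
    field_simp

theorem psiOf_rpow_le_iff (hpq : p.HolderConjugate q) {x y : ℝ} (hx : 0 ≤ x) (hy : 0 ≤ y) :
    psiOf (fun x => x ^ p) x ≤ y ↔ x ≤ p * (y / (p * (p - 1))) ^ (q + 1)⁻¹ := by
  have hp : 0 < p := hpq.pos
  have hq : 0 < q := hpq.symm.pos
  have hp₁ : 0 < p - 1 := hpq.sub_one_pos
  rw [psiOf_rpow hpq hx, ← div_le_iff₀' hp,
    Real.le_rpow_inv_iff_of_pos (by positivity) (by positivity) (by positivity),
    le_div_iff₀' (by positivity)]

theorem psiInv_rpow (hpq : p.HolderConjugate q) {y : ℝ} (hy : 0 ≤ y) :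
    psiInv (fun x => x ^ p) y = p * (y / (p * (p - 1))) ^ (q + 1)⁻¹ := by
  have hp : 0 < p := hpq.pos
  have hp₁ : 0 < p - 1 := hpq.sub_one_pos
  have hsublevel : {x | 0 ≤ x ∧ psiOf (fun x => x ^ p) x ≤ y} =
      Icc 0 (p * (y / (p * (p - 1))) ^ (q + 1)⁻¹) :=
    ext fun x => and_congr_right fun hx => psiOf_rpow_le_iff hpq hx hy
  rw [psiInv, hsublevel, csSup_Icc (by positivity)]

theorem psiInv_rpow_inv_mul_self (hpq : p.HolderConjugate q) {x : ℝ} (hx : 0 < x) :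
    psiInv (fun x => x ^ p) x⁻¹ * x =
      p * (p * (p - 1))⁻¹ ^ (q + 1)⁻¹ * x ^ (q / (q + 1)) := by
  have hp : 0 < p := hpq.pos
  have hq : 0 < q := hpq.symm.pos
  have hp₁ : 0 < p - 1 := hpq.sub_one_pos
  have hpow : x⁻¹ ^ (q + 1)⁻¹ * x = x ^ (q / (q + 1)) := by
    rw [Real.inv_rpow hx.le, ← Real.rpow_neg hx.le, ← Real.rpow_add_one hx.ne']
    congr 1
    field_simp
    ring
  rw [psiInv_rpow hpq (by positivity), div_eq_mul_inv,
    Real.mul_rpow (by positivity) (by positivity), ← hpow]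
  ring

theorem lambdaMix_rpow_le (hpq : p.HolderConjugate q) {x : ℝ} (hx : 0 < x) :
    lambdaMix (fun x => x ^ p) x ≤
      (p * (p * (p - 1))⁻¹ ^ (q + 1)⁻¹ + 1) * max (x ^ (q / (q + 1))) x := by
  have hp : 0 < p := hpq.pos
  have hp₁ : 0 < p - 1 := hpq.sub_one_pos
  calc lambdaMix (fun x => x ^ p) x
      ≤ psiInv (fun x => x ^ p) x⁻¹ * x + x := lambdaMix_le_psiInv_mul_add _ hx.le
    _ = p * (p * (p - 1))⁻¹ ^ (q + 1)⁻¹ * x ^ (q / (q + 1)) + x := by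
        rw [psiInv_rpow_inv_mul_self hpq hx]
    _ ≤ p * (p * (p - 1))⁻¹ ^ (q + 1)⁻¹ * max (x ^ (q / (q + 1))) x +
          max (x ^ (q / (q + 1))) x := by
        gcongr
        · exact le_max_left _ _
        · exact le_max_right _ _
    _ = (p * (p * (p - 1))⁻¹ ^ (q + 1)⁻¹ + 1) * max (x ^ (q / (q + 1))) x :=
        (add_one_mul _ _).symm

theorem mixing_polynomial_compatibility_and_rate_general (hpq : p.HolderConjugate q) :
    ((fun x : ℝ => x ^ p) 0 = 0 ∧
      ConvexOn ℝ (Ici 0) (fun x : ℝ => x ^ p) ∧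
      DifferentiableOn ℝ (fun x : ℝ => x ^ p) (Ioi 0) ∧
      (∃ c₀ : ℝ, ∀ y : ℝ, 0 < y → deriv (fun x : ℝ => x ^ p) y * y ≤ c₀ * y ^ p) ∧
      ConvexOn ℝ (Ioi 0) (fun y : ℝ => y / y ^ p) ∧
      AntitoneOn (fun y : ℝ => y / y ^ p) (Ioi 0) ∧
      (∀ β : ℕ → ℝ, Summable (fun k : ℕ => (k : ℝ) ^ (q - 1) * β k) →
        Summable (fun k : ℕ =>
          (phiConj (fun x => x ^ p) ((k : ℝ) + 1) - phiConj (fun x => x ^ p) (k : ℝ)) * β k))) ∧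
    ∃ c : ℝ, 0 < c ∧ ∀ x : ℝ, 0 < x →
      lambdaMix (fun x => x ^ p) x ≤ c * max (x ^ (q / (q + 1))) x := by
  have hp : 0 < p := hpq.pos
  have hp₁ : 0 < p - 1 := hpq.sub_one_pos
  have hdiff : DifferentiableOn ℝ (fun x : ℝ => x ^ p) (Ioi 0) := fun y hy =>
    (Real.differentiableAt_rpow_const_of_ne p (ne_of_gt hy)).differentiableWithinAt
  exact ⟨⟨Real.zero_rpow hpq.ne_zero, convexOn_rpow hpq.lt.le, hdiff,
      ⟨p, fun y hy => (deriv_rpow_const_mul_self p hy.ne').le⟩,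
      convexOn_div_rpow hpq.lt.le, antitoneOn_div_rpow hpq.lt.le,
      fun _ => summable_phiConj_rpow_add_one_sub_mul hpq⟩,
    p * (p * (p - 1))⁻¹ ^ (q + 1)⁻¹ + 1, by positivity, fun _ => lambdaMix_rpow_le hpq⟩

end HolderConjugate

/-- **Polynomially decaying mixing coefficients: compatibility and rate.**
Let `α > 1` and `φ(x) = x^{α/(α−1)}`.  Then (a) `φ` satisfies the compatibility
conditions: `φ 0 = 0`; `φ` is convex and differentiable on `(0,∞)` with
`c₀ = sup_y φ'(y)·y/φ(y) < ∞`; `y ↦ y/φ(y)` is convex and decreasing on `(0,∞)`;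
and for every nonincreasing `β : ℕ → [0,1]` with `β 0 = 1` and
`∑ k^{α−1}·β k < ∞` one has `∑ (φ*(k+1) − φ*(k))·β k < ∞`.
(b) There is `c_α > 0` depending only on `α` with
`Λ^mix(x) ≤ c_α·(x^{α/(α+1)} ⊔ x)` for all `x > 0`. -/
theorem mixing_polynomial_compatibility_and_rate (α : ℝ) (hα : 1 < α) :
    ((fun x : ℝ => x ^ (α / (α - 1))) 0 = 0 ∧
      ConvexOn ℝ (Set.Ici (0 : ℝ)) (fun x : ℝ => x ^ (α / (α - 1))) ∧
      DifferentiableOn ℝ (fun x : ℝ => x ^ (α / (α - 1))) (Set.Ioi (0 : ℝ)) ∧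
      (∃ c₀ : ℝ, ∀ y : ℝ, 0 < y →
        deriv (fun x : ℝ => x ^ (α / (α - 1))) y * y ≤ c₀ * y ^ (α / (α - 1))) ∧
      ConvexOn ℝ (Set.Ioi (0 : ℝ)) (fun y : ℝ => y / y ^ (α / (α - 1))) ∧
      AntitoneOn (fun y : ℝ => y / y ^ (α / (α - 1))) (Set.Ioi (0 : ℝ)) ∧
      (∀ β : ℕ → ℝ, Antitone β → (∀ k, β k ∈ Set.Icc (0 : ℝ) 1) → β 0 = 1 →
        Summable (fun k : ℕ => (k : ℝ) ^ (α - 1) * β k) →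
        Summable (fun k : ℕ =>
          (phiConj (fun x : ℝ => x ^ (α / (α - 1))) ((k : ℝ) + 1) -
            phiConj (fun x : ℝ => x ^ (α / (α - 1))) (k : ℝ)) * β k))) ∧
    ∃ c : ℝ, 0 < c ∧ ∀ x : ℝ, 0 < x →
      lambdaMix (fun x : ℝ => x ^ (α / (α - 1))) x ≤
        c * max (x ^ (α / (α + 1))) x := by
  obtain ⟨⟨hzero, hconvex, hdiff, hderiv, hdiv_convex, hdiv_antitone, hsummable⟩, hrate⟩ :=
    mixing_polynomial_compatibility_and_rate_general
      ((Real.holderConjugate_iff_eq_conjExponent hα).2 rfl).symm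
  exact ⟨⟨hzero, hconvex, hdiff, hderiv, hdiv_convex, hdiv_antitone,
    fun β _ _ _ => hsummable β⟩, hrate⟩
end

section
/- Let β : ℕ₀ → [0,1] be nonincreasing with β(0) = 1 and suppose β(k) ≤ κ·ρ^k for some κ > 0 and ρ ∈ (0,1). Then with a := (ρ+1)/(2ρ), the function φ(x) := x·log(x+1)/log(a) satisfies the compatibility conditions (φ(0)=0; φ convex and differentiable with c₀ := sup_{y>0} φ'(y)y/φ(y) < ∞; y ↦ y/φ(y) convex and decreasing on (0,∞); Σ_{k=0}^∞ (φ*(k+1)−φ*(k))·β(k) < ∞), and the associated rate function satisfies Λ^mix(x) ≤ c_ρ·(1 ∨ log(x^{−1}))·x for all x > 0, where c_ρ > 0 depends only on ρ. -/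
open Asymptotics Filter Real Set Topology

section Conjugate

variable {φ : ℝ → ℝ} {x y z B : ℝ}

/-- The values `x * y - φ x`, `x > 0`, whose supremum is the convex conjugate `phiConj φ y`. The
supremum is meaningful only where this set is bounded above; elsewhere `phiConj φ y` is `0`. -/
def conjValues (φ : ℝ → ℝ) (y : ℝ) : Set ℝ :=
  {z : ℝ | ∃ x > 0, z = x * y - φ x}

lemma le_phiConj (hφ : BddAbove (conjValues φ y)) (hx : 0 < x) : x * y - φ x ≤ phiConj φ y :=
  le_csSup hφ ⟨x, hx, rfl⟩

lemma phiConj_le (h : ∀ x > 0, x * y - φ x ≤ B) : phiConj φ y ≤ B := by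
  refine csSup_le ⟨_, 1, one_pos, rfl⟩ ?_
  rintro _ ⟨x, hx, rfl⟩
  exact h x hx

lemma phiConj_le_phiConj (hφ : BddAbove (conjValues φ z)) (hyz : y ≤ z) :
    phiConj φ y ≤ phiConj φ z :=
  phiConj_le fun x hx => calc
    x * y - φ x ≤ x * z - φ x := by gcongr
    _ ≤ phiConj φ z := le_phiConj hφ hx

lemma phiConj_nonneg (hφ : BddAbove (conjValues φ y)) (hφ₀ : Tendsto φ (𝓝[>] 0) (𝓝 0)) :
    0 ≤ phiConj φ y := by
  have hlin : Tendsto (fun x : ℝ => x * y) (𝓝[>] 0) (𝓝 0) := by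
    simpa only [zero_mul] using
      ((continuous_mul_const y).tendsto 0).mono_left nhdsWithin_le_nhds
  have hlim : Tendsto (fun x => x * y - φ x) (𝓝[>] 0) (𝓝 0) := by
    simpa only [sub_zero] using hlin.sub hφ₀
  exact le_of_tendsto hlim (eventually_mem_nhdsWithin.mono fun x hx => le_phiConj hφ hx)

lemma lambdaMix_le_of_psiInv_le (hx : 0 ≤ x) (h : psiInv φ x⁻¹ ≤ B) :
    lambdaMix φ x ≤ (B + 1) * x := by
  have hnonneg : 0 ≤ psiInv φ x⁻¹ := Real.sSup_nonneg fun t ht => ht.1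
  have hceil : (⌈psiInv φ x⁻¹⌉₊ : ℝ) ≤ B + 1 :=
    (Nat.ceil_lt_add_one hnonneg).le.trans (by gcongr)
  exact mul_le_mul_of_nonneg_right hceil hx

end Conjugate

lemma convexOn_inv_of_concaveOn {E : Type*} [AddCommMonoid E] [Module ℝ E] {s : Set E} {f : E → ℝ}
    (hf : ConcaveOn ℝ s f) (hpos : ∀ x ∈ s, 0 < f x) : ConvexOn ℝ s fun x => (f x)⁻¹ := by
  refine ⟨hf.1, fun x hx y hy p q hp hq hpq => ?_⟩
  have hmean : 0 < p • f x + q • f y := convex_Ioi (0 : ℝ) (hpos x hx) (hpos y hy) hp hq hpq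
  have hinv : (p • f x + q • f y)⁻¹ ≤ p • (f x)⁻¹ + q • (f y)⁻¹ := by
    simpa only [zpow_neg_one] using
      (convexOn_zpow (𝕜 := ℝ) (-1)).2 (hpos x hx) (hpos y hy) hp hq hpq
  exact (inv_anti₀ hmean (hf.2 hx hy hp hq hpq)).trans hinv

lemma log_add_one_pos {y : ℝ} (hy : 0 < y) : 0 < log (y + 1) :=
  log_pos (by linarith)

lemma concaveOn_log_add_one : ConcaveOn ℝ (Ioi (-1)) fun x : ℝ => log (x + 1) := by
  have h := strictConcaveOn_log_Ioi.concaveOn.translate_left (1 : ℝ)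
  rwa [preimage_const_add_Ioi, zero_sub] at h

lemma log_one_add_half_le_max {y : ℝ} (hy : 0 < y) : log (1 + y / 2) ≤ max 1 (log y) := by
  set M := max 1 (log y)
  have hone : 1 ≤ M := le_max_left _ _
  have hy_le : y ≤ exp M := (log_le_iff_le_exp hy).1 (le_max_right _ _)
  have htwo_le : 2 ≤ exp M := by linarith [add_one_le_exp M]
  exact (log_le_iff_le_exp (by positivity)).2 (by linarith)

lemma summable_add_one_mul_geometric {r : ℝ} (hr : |r| < 1) :
    Summable fun k : ℕ => ((k : ℝ) + 1) * r ^ k := by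
  have hlin : Summable fun k : ℕ => (k : ℝ) ^ 1 * r ^ k :=
    summable_pow_mul_geometric_of_norm_lt_one 1 hr
  refine (hlin.add (summable_geometric_of_abs_lt_one hr)).congr fun k => ?_
  ring

lemma isBigO_pow_of_nonneg_of_le {κ ρ : ℝ} {β : ℕ → ℝ} (hβ₀ : ∀ k, 0 ≤ β k)
    (hβ : ∀ k, β k ≤ κ * ρ ^ k) : β =O[atTop] fun k => ρ ^ k := by
  have hnorm (k : ℕ) : ‖β k‖ ≤ κ * ρ ^ k := (abs_of_nonneg (hβ₀ k)).trans_le (hβ k)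
  exact (IsBigO.of_norm_le hnorm).trans (isBigO_const_mul_self κ _ _)

/-- The function `φ` of the theorem for a general base `a`. It equals `x * logb a (x + 1)`; the
quotient is written out to agree syntactically with the theorem. -/
noncomputable def phiLog (a : ℝ) : ℝ → ℝ := fun x => x * log (x + 1) / log a

section Shape

variable {a y : ℝ}

lemma phiLog_eq_mul_logb (a x : ℝ) : phiLog a x = x * logb a (x + 1) :=
  mul_div_assoc _ _ _

@[simp]
lemma phiLog_zero (a : ℝ) : phiLog a 0 = 0 := by
  simp [phiLog]

lemma hasDerivAt_phiLog (a : ℝ) (hy : -1 < y) :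
    HasDerivAt (phiLog a) ((log (y + 1) + (1 - (y + 1)⁻¹)) / log a) y := by
  have hne : y + 1 ≠ 0 := by linarith
  have h := ((hasDerivAt_id' y).mul (((hasDerivAt_id' y).add_const 1).log hne)).div_const (log a)
  refine h.congr_deriv ?_
  field_simp
  ring

lemma differentiableOn_phiLog (a : ℝ) : DifferentiableOn ℝ (phiLog a) (Ioi (-1)) := fun _ hx =>
  (hasDerivAt_phiLog a hx).differentiableAt.differentiableWithinAt

lemma convexOn_phiLog (ha : 1 ≤ a) : ConvexOn ℝ (Ioi (-1)) (phiLog a) := by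
  refine MonotoneOn.convexOn_of_deriv (convex_Ioi _) (differentiableOn_phiLog a).continuousOn
    ((differentiableOn_phiLog a).mono interior_subset) ?_
  rw [interior_Ioi]
  intro x hx y hy hxy
  have hx₁ : 0 < x + 1 := neg_lt_iff_pos_add.1 hx
  have hloga : 0 ≤ log a := log_nonneg ha
  rw [(hasDerivAt_phiLog a hx).deriv, (hasDerivAt_phiLog a hy).deriv]
  gcongr

lemma deriv_phiLog_mul_self_le (ha : 1 ≤ a) (hy : 0 ≤ y) :
    deriv (phiLog a) y * y ≤ 2 * phiLog a y := by
  have hlog : 1 - (y + 1)⁻¹ ≤ log (y + 1) := one_sub_inv_le_log_of_pos (by positivity)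
  have hloga : 0 ≤ log a := log_nonneg ha
  calc deriv (phiLog a) y * y
      = (log (y + 1) + (1 - (y + 1)⁻¹)) / log a * y := by
        rw [(hasDerivAt_phiLog a (by linarith)).deriv]
    _ ≤ (log (y + 1) + log (y + 1)) / log a * y := by gcongr
    _ = 2 * phiLog a y := by rw [phiLog]; ring

lemma eqOn_div_phiLog (a : ℝ) :
    EqOn (fun y => log a * (log (y + 1))⁻¹) (fun y => y / phiLog a y) (Ioi 0) := by
  intro y hy
  have hy₀ : y ≠ 0 := ne_of_gt hy
  simp only [phiLog]
  field_simp

lemma convexOn_div_phiLog (ha : 1 ≤ a) : ConvexOn ℝ (Ioi 0) fun y => y / phiLog a y := by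
  have hconcave : ConcaveOn ℝ (Ioi 0) fun y : ℝ => log (y + 1) :=
    concaveOn_log_add_one.subset (Ioi_subset_Ioi (by norm_num)) (convex_Ioi 0)
  exact ((convexOn_inv_of_concaveOn hconcave fun _ => log_add_one_pos).smul
    (log_nonneg ha)).congr (eqOn_div_phiLog a)

lemma antitoneOn_div_phiLog (ha : 1 ≤ a) : AntitoneOn (fun y => y / phiLog a y) (Ioi 0) := by
  refine AntitoneOn.congr (fun x (hx : 0 < x) y _ hxy => ?_) (eqOn_div_phiLog a)
  have hlog : 0 < log (x + 1) := log_add_one_pos hx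
  have hloga : 0 ≤ log a := log_nonneg ha
  gcongr

end Shape

section ConjugateBounds

variable {a x y t ρ : ℝ}

lemma mul_sub_phiLog_le (ha : 1 < a) (hx : 0 < x) (hy : 0 ≤ y) :
    x * y - phiLog a x ≤ y * a ^ y := by
  rw [phiLog_eq_mul_logb]
  rcases le_total x (a ^ y) with hsmall | hlarge
  · have hlogb : 0 ≤ logb a (x + 1) := logb_nonneg ha (by linarith)
    calc x * y - x * logb a (x + 1) ≤ x * y := sub_le_self _ (by positivity)
      _ ≤ y * a ^ y := by rw [mul_comm]; gcongr
  · have hlogb : y ≤ logb a (x + 1) := (le_logb_iff_rpow_le ha (by positivity)).2 (by linarith)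
    calc x * y - x * logb a (x + 1) ≤ 0 := sub_nonpos.2 (by gcongr)
      _ ≤ y * a ^ y := by positivity

lemma bddAbove_conjValues_phiLog (ha : 1 < a) (hy : 0 ≤ y) :
    BddAbove (conjValues (phiLog a) y) := by
  refine ⟨y * a ^ y, ?_⟩
  rintro _ ⟨x, hx, rfl⟩
  exact mul_sub_phiLog_le ha hx hy

lemma phiConj_phiLog_le (ha : 1 < a) (hy : 0 ≤ y) : phiConj (phiLog a) y ≤ y * a ^ y :=
  phiConj_le fun _ hx => mul_sub_phiLog_le ha hx hy

lemma phiConj_phiLog_nonneg (ha : 1 < a) (hy : 0 ≤ y) : 0 ≤ phiConj (phiLog a) y := by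
  have hcont : Tendsto (phiLog a) (𝓝 0) (𝓝 0) := by
    simpa only [phiLog_zero] using
      (hasDerivAt_phiLog a (neg_one_lt_zero (R := ℝ))).continuousAt.tendsto
  exact phiConj_nonneg (bddAbove_conjValues_phiLog ha hy) (hcont.mono_left nhdsWithin_le_nhds)

lemma abs_phiConj_phiLog_add_one_sub_le (ha : 1 < a) (k : ℕ) :
    |phiConj (phiLog a) (k + 1) - phiConj (phiLog a) k| ≤ (k + 1) * a ^ (k + 1) := by
  have hk : (0 : ℝ) ≤ k := k.cast_nonneg
  have hk₁ : (0 : ℝ) ≤ k + 1 := by positivity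
  have hmono : phiConj (phiLog a) k ≤ phiConj (phiLog a) (k + 1) :=
    phiConj_le_phiConj (bddAbove_conjValues_phiLog ha hk₁) (by linarith)
  calc |phiConj (phiLog a) (k + 1) - phiConj (phiLog a) k|
      = phiConj (phiLog a) (k + 1) - phiConj (phiLog a) k := abs_of_nonneg (sub_nonneg.2 hmono)
    _ ≤ phiConj (phiLog a) (k + 1) := sub_le_self _ (phiConj_phiLog_nonneg ha hk)
    _ ≤ (k + 1) * a ^ ((k : ℝ) + 1) := phiConj_phiLog_le ha hk₁
    _ = (k + 1) * a ^ (k + 1) := by rw [← rpow_natCast]; push_cast; rfl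

lemma summable_phiConj_phiLog_sub_mul (ha : 1 < a) (haρ : |a * ρ| < 1) {β : ℕ → ℝ}
    (hβ : β =O[atTop] fun k => ρ ^ k) :
    Summable fun k : ℕ => (phiConj (phiLog a) (k + 1) - phiConj (phiLog a) k) * β k := by
  have hdiff : (fun k : ℕ => phiConj (phiLog a) (k + 1) - phiConj (phiLog a) k)
      =O[atTop] fun k => ((k : ℝ) + 1) * a ^ (k + 1) :=
    .of_norm_le (abs_phiConj_phiLog_add_one_sub_le ha)
  have hdom : Summable fun k : ℕ => ((k : ℝ) + 1) * a ^ (k + 1) * ρ ^ k := by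
    refine ((summable_add_one_mul_geometric haρ).mul_left a).congr fun k => ?_
    ring
  exact summable_of_isBigO_nat hdom (hdiff.mul hβ)

lemma le_phiConj_phiLog (ha : 1 < a) (ht : 0 < t) :
    (a ^ (t / 2) - 1) * (t / 2) ≤ phiConj (phiLog a) t := by
  have hpos : 0 < a ^ (t / 2) - 1 := sub_pos.2 (one_lt_rpow ha (by positivity))
  have hvalue : phiLog a (a ^ (t / 2) - 1) = (a ^ (t / 2) - 1) * (t / 2) := by
    rw [phiLog_eq_mul_logb, sub_add_cancel, logb_rpow (by positivity) ha.ne']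
  calc (a ^ (t / 2) - 1) * (t / 2)
      = (a ^ (t / 2) - 1) * t - phiLog a (a ^ (t / 2) - 1) := by rw [hvalue]; ring
    _ ≤ phiConj (phiLog a) t := le_phiConj (bddAbove_conjValues_phiLog ha ht.le) hpos

lemma le_psiOf_phiLog (ha : 1 < a) (ht : 2 ≤ t) :
    2 * (a ^ (t / 2) - 1) ≤ psiOf (phiLog a) t := by
  have hpos : 0 ≤ a ^ (t / 2) - 1 := sub_nonneg.2 (one_le_rpow ha.le (by positivity))
  calc 2 * (a ^ (t / 2) - 1) = (a ^ (t / 2) - 1) * (2 / 2) * 2 := by ring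
    _ ≤ (a ^ (t / 2) - 1) * (t / 2) * t := by gcongr
    _ ≤ psiOf (phiLog a) t :=
      mul_le_mul_of_nonneg_right (le_phiConj_phiLog ha (by positivity)) (by positivity)

lemma psiInv_phiLog_le_max (ha : 1 < a) (y : ℝ) :
    psiInv (phiLog a) y ≤ max 2 (2 * logb a (1 + y / 2)) := by
  refine Real.sSup_le ?_ (le_max_of_le_left zero_le_two)
  rintro t ⟨-, hψ⟩
  rcases le_total t 2 with hle | hge
  · exact le_max_of_le_left hle
  · have hpow : a ^ (t / 2) ≤ 1 + y / 2 := by linarith [le_psiOf_phiLog ha hge]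
    have hlogb : t / 2 ≤ logb a (1 + y / 2) :=
      (le_logb_iff_rpow_le ha ((by positivity : 0 < a ^ (t / 2)).trans_le hpow)).2 hpow
    exact le_max_of_le_right (by linarith)

lemma psiInv_phiLog_le (ha : 1 < a) (hy : 0 < y) :
    psiInv (phiLog a) y ≤ (2 + 2 / log a) * max 1 (log y) := by
  have hloga : 0 < log a := log_pos ha
  have hM : 1 ≤ max 1 (log y) := le_max_left _ _
  have hlogb : logb a (1 + y / 2) ≤ max 1 (log y) / log a := by
    rw [logb]
    gcongr
    exact log_one_add_half_le_max hy
  have hlogb_bound_nonneg : 0 ≤ max 1 (log y) / log a := by positivity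
  calc psiInv (phiLog a) y ≤ max 2 (2 * logb a (1 + y / 2)) := psiInv_phiLog_le_max ha y
    _ ≤ 2 * max 1 (log y) + 2 * (max 1 (log y) / log a) := max_le (by linarith) (by linarith)
    _ = (2 + 2 / log a) * max 1 (log y) := by ring

lemma lambdaMix_phiLog_le (ha : 1 < a) (hx : 0 < x) :
    lambdaMix (phiLog a) x ≤ (3 + 2 / log a) * (max 1 (log x⁻¹) * x) := by
  have hM : 1 ≤ max 1 (log x⁻¹) := le_max_left _ _
  calc lambdaMix (phiLog a) x
      ≤ ((2 + 2 / log a) * max 1 (log x⁻¹) + 1) * x :=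
        lambdaMix_le_of_psiInv_le hx.le (psiInv_phiLog_le ha (inv_pos.2 hx))
    _ ≤ ((2 + 2 / log a) * max 1 (log x⁻¹) + max 1 (log x⁻¹)) * x := by gcongr
    _ = (3 + 2 / log a) * (max 1 (log x⁻¹) * x) := by ring

end ConjugateBounds

lemma one_lt_add_one_div_two_mul {ρ : ℝ} (hρ₀ : 0 < ρ) (hρ₁ : ρ < 1) :
    1 < (ρ + 1) / (2 * ρ) := by
  rw [one_lt_div (by positivity)]
  linarith

lemma abs_add_one_div_two_mul_mul_self_lt_one {ρ : ℝ} (hρ₀ : 0 < ρ) (hρ₁ : ρ < 1) :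
    |(ρ + 1) / (2 * ρ) * ρ| < 1 := by
  rw [abs_of_pos (by positivity)]
  field_simp
  linarith

theorem mixing_geometric_compatibility_and_rate_general {a ρ : ℝ} (ha : 1 < a)
    (haρ : |a * ρ| < 1) :
    (phiLog a 0 = 0 ∧
      ConvexOn ℝ (Ici 0) (phiLog a) ∧
      DifferentiableOn ℝ (phiLog a) (Ioi 0) ∧
      (∃ c₀ : ℝ, ∀ y : ℝ, 0 < y → deriv (phiLog a) y * y ≤ c₀ * phiLog a y) ∧
      ConvexOn ℝ (Ioi 0) (fun y => y / phiLog a y) ∧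
      AntitoneOn (fun y => y / phiLog a y) (Ioi 0) ∧
      (∀ β : ℕ → ℝ, (β =O[atTop] fun k => ρ ^ k) →
        Summable fun k : ℕ => (phiConj (phiLog a) (k + 1) - phiConj (phiLog a) k) * β k)) ∧
    ∃ c : ℝ, 0 < c ∧ ∀ x : ℝ, 0 < x →
      lambdaMix (phiLog a) x ≤ c * (max 1 (log x⁻¹) * x) := by
  have hloga : 0 < log a := log_pos ha
  exact ⟨⟨phiLog_zero a,
    (convexOn_phiLog ha.le).subset (Ici_subset_Ioi.2 neg_one_lt_zero) (convex_Ici 0),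
    (differentiableOn_phiLog a).mono (Ioi_subset_Ioi (by norm_num)),
    ⟨2, fun _ hy => deriv_phiLog_mul_self_le ha.le hy.le⟩,
    convexOn_div_phiLog ha.le, antitoneOn_div_phiLog ha.le,
    fun _ => summable_phiConj_phiLog_sub_mul ha haρ⟩,
    3 + 2 / log a, by positivity, fun _ => lambdaMix_phiLog_le ha⟩

/-- **Geometrically decaying mixing coefficients: compatibility and rate.**
Let `β : ℕ → [0,1]` be nonincreasing with `β 0 = 1` and `β k ≤ κ·ρ^k` for some
`κ > 0`, `ρ ∈ (0,1)`.  With `a = (ρ+1)/(2ρ)` and `φ(x) = x·log(x+1)/log a`: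
(a) `φ` satisfies the compatibility conditions (`φ 0 = 0`; convex, differentiable,
`c₀ < ∞`; `y ↦ y/φ(y)` convex and decreasing on `(0,∞)`;
`∑ (φ*(k+1) − φ*(k))·β k < ∞`); and
(b) there is `c_ρ > 0` depending only on `ρ` with
`Λ^mix(x) ≤ c_ρ·(1 ⊔ log(x⁻¹))·x` for all `x > 0`. -/
theorem mixing_geometric_compatibility_and_rate
    (κ ρ : ℝ) (hκ : 0 < κ) (hρ₀ : 0 < ρ) (hρ₁ : ρ < 1) :
    ((fun x : ℝ => x * Real.log (x + 1) / Real.log ((ρ + 1) / (2 * ρ))) 0 = 0 ∧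
      ConvexOn ℝ (Set.Ici (0 : ℝ))
        (fun x : ℝ => x * Real.log (x + 1) / Real.log ((ρ + 1) / (2 * ρ))) ∧
      DifferentiableOn ℝ
        (fun x : ℝ => x * Real.log (x + 1) / Real.log ((ρ + 1) / (2 * ρ)))
        (Set.Ioi (0 : ℝ)) ∧
      (∃ c₀ : ℝ, ∀ y : ℝ, 0 < y →
        deriv (fun x : ℝ => x * Real.log (x + 1) / Real.log ((ρ + 1) / (2 * ρ))) y * y
          ≤ c₀ * (y * Real.log (y + 1) / Real.log ((ρ + 1) / (2 * ρ)))) ∧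
      ConvexOn ℝ (Set.Ioi (0 : ℝ))
        (fun y : ℝ => y / (y * Real.log (y + 1) / Real.log ((ρ + 1) / (2 * ρ)))) ∧
      AntitoneOn
        (fun y : ℝ => y / (y * Real.log (y + 1) / Real.log ((ρ + 1) / (2 * ρ))))
        (Set.Ioi (0 : ℝ)) ∧
      (∀ β : ℕ → ℝ, Antitone β → (∀ k, β k ∈ Set.Icc (0 : ℝ) 1) → β 0 = 1 →
        (∀ k : ℕ, β k ≤ κ * ρ ^ k) →
        Summable (fun k : ℕ =>
          (phiConj (fun x : ℝ => x * Real.log (x + 1) / Real.log ((ρ + 1) / (2 * ρ)))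
              ((k : ℝ) + 1) -
            phiConj (fun x : ℝ => x * Real.log (x + 1) / Real.log ((ρ + 1) / (2 * ρ)))
              (k : ℝ)) * β k))) ∧
    ∃ c : ℝ, 0 < c ∧ ∀ x : ℝ, 0 < x →
      lambdaMix (fun x : ℝ => x * Real.log (x + 1) / Real.log ((ρ + 1) / (2 * ρ))) x ≤
        c * (max 1 (Real.log x⁻¹) * x) := by
  obtain ⟨⟨h_zero, h_convex, h_diff, h_c₀, h_div_convex, h_div_anti, h_sum⟩, h_rate⟩ :=
    mixing_geometric_compatibility_and_rate_general (one_lt_add_one_div_two_mul hρ₀ hρ₁)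
      (abs_add_one_div_two_mul_mul_self_lt_one hρ₀ hρ₁)
  exact ⟨⟨h_zero, h_convex, h_diff, h_c₀, h_div_convex, h_div_anti, fun β _ h_mem _ h_le =>
    h_sum β (isBigO_pow_of_nonneg_of_le (fun k => (h_mem k).1) h_le)⟩, h_rate⟩
end

section
/- Let Δ : ℕ₀ → [0,∞) be nonincreasing with Δ(j) ≤ κ·j^{−α} for all j ≥ 1, for some κ > 0 and α > 1. Then there is a constant c_{κ,α} > 0 depending only on κ and α such that for every x ≥ 0 one can choose ȳ(x) ≥ 0 with Ṽ(√x·ȳ(x)) ≤ ȳ(x) and with the associated rate Λ^dep(x) := √x·ȳ(x) satisfying Λ^dep(x) ≤ c_{κ,α}·max{x^{α/(α+1)}, x}. -/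
/-!
Write `u = √(√x·ȳ)`, so that `ȳ = u² / √x` and the requirement on `ȳ` reads `Ṽ(u²) ≤ u² / √x`.
Splitting the series at the index `T = (κ/u)^(1/α)`, where `κ·T^(-α) = u`, gives
`Ṽ(u²) ≤ 3u + b·u^(1 - 1/α)` with `b = α/(α - 1)·κ^(1/α)`. Each of the two summands is at most half
of `u² / √x` as soon as `u ≥ 6√x` and `u ≥ (2b√x)^(α/(α + 1))` respectively. Taking `u` to be the
maximum of the two thresholds makes `u²` of order `max(x, x^(α/(α + 1)))`.
-/

open Finset

/-- The function `Ṽ` attached to the dependence coefficients `Δ`. The series is a `tsum`, hence `0`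
if it diverges; for `Δ` summable and nonnegative it is the sum in the paper. -/
noncomputable def vTilde (Δ : ℕ → ℝ) (x : ℝ) : ℝ :=
  √x + ∑' j : ℕ, min (√x) (Δ j)

lemma vTilde_sq (Δ : ℕ → ℝ) {u : ℝ} (hu : 0 ≤ u) :
    vTilde Δ (u ^ 2) = u + ∑' j : ℕ, min u (Δ j) := by
  rw [vTilde, Real.sqrt_sq hu]

lemma vTilde_zero {Δ : ℕ → ℝ} (hΔ : ∀ j, 0 ≤ Δ j) : vTilde Δ 0 = 0 := by
  simp [vTilde, hΔ]

lemma tsum_min_le_of_sum_tail_le {f : ℕ → ℝ} (hf : ∀ j, 0 ≤ f j) {u : ℝ} (hu : 0 ≤ u) {N : ℕ}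
    {B : ℝ} (htail : ∀ n, ∑ i ∈ range n, f (N + i) ≤ B) :
    ∑' j : ℕ, min u (f j) ≤ N * u + B := by
  have hmin : ∀ j, 0 ≤ min u (f j) := fun j ↦ le_min hu (hf j)
  refine Real.tsum_le_of_sum_range_le hmin fun n ↦ ?_
  calc ∑ j ∈ range n, min u (f j)
      ≤ ∑ j ∈ range (N + n), min u (f j) :=
        sum_le_sum_of_subset_of_nonneg (range_mono (Nat.le_add_left n N)) fun j _ _ ↦ hmin j
    _ = ∑ j ∈ range N, min u (f j) + ∑ i ∈ range n, min u (f (N + i)) := sum_range_add _ N n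
    _ ≤ ∑ _j ∈ range N, u + ∑ i ∈ range n, f (N + i) := by
        gcongr
        · exact min_le_left _ _
        · exact min_le_right _ _
    _ ≤ N * u + B := by
        rw [sum_const, card_range, nsmul_eq_mul]
        gcongr
        exact htail n

lemma integral_rpow_neg_le {α a b : ℝ} (hα : 1 < α) (ha : 0 < a) (hab : a ≤ b) :
    ∫ t in a..b, t ^ (-α) ≤ a ^ (1 - α) / (α - 1) := by
  have hzero : (0 : ℝ) ∉ Set.uIcc a b := Set.notMem_uIcc_of_lt ha (ha.trans_le hab)
  rw [integral_rpow (Or.inr ⟨by linarith, hzero⟩), neg_add_eq_sub, ← neg_div_neg_eq, neg_sub,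
    neg_sub]
  gcongr
  exact sub_le_self _ (Real.rpow_nonneg (ha.le.trans hab) _)

lemma sum_range_add_rpow_neg_le {α a : ℝ} (hα : 1 < α) (ha : 0 < a) (n : ℕ) :
    ∑ i ∈ range n, (a + i) ^ (-α) ≤ a ^ (-α) + a ^ (1 - α) / (α - 1) := by
  have hanti : AntitoneOn (fun t : ℝ ↦ t ^ (-α)) (Set.Icc a (a + n)) := fun s hs t _ hst ↦
    Real.rpow_le_rpow_of_nonpos (ha.trans_le hs.1) hst (by linarith)
  calc ∑ i ∈ range n, (a + i) ^ (-α)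
      ≤ ∑ i ∈ range (n + 1), (a + i) ^ (-α) :=
        sum_le_sum_of_subset_of_nonneg (range_mono n.le_succ) fun i _ _ ↦ by positivity
    _ = a ^ (-α) + ∑ i ∈ range n, (a + (i + 1 : ℕ)) ^ (-α) := by
        rw [sum_range_succ', Nat.cast_zero, add_zero, add_comm]
    _ ≤ a ^ (-α) + ∫ t in a..a + n, t ^ (-α) := by
        gcongr
        exact hanti.sum_le_integral
    _ ≤ a ^ (-α) + a ^ (1 - α) / (α - 1) := by
        gcongr
        exact integral_rpow_neg_le hα ha (by linarith [n.cast_nonneg (α := ℝ)])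

section PolynomialDecay

variable {κ α : ℝ} {Δ : ℕ → ℝ}

lemma tsum_min_le_of_le_rpow_neg (hκ : 0 ≤ κ) (hα : 1 < α) (hΔ : ∀ j, 0 ≤ Δ j)
    (hdecay : ∀ j : ℕ, 1 ≤ j → Δ j ≤ κ * (j : ℝ) ^ (-α)) {u T : ℝ} (hu : 0 ≤ u) (hT : 0 < T) :
    ∑' j : ℕ, min u (Δ j) ≤ (T + 1) * u + κ * (T ^ (-α) + T ^ (1 - α) / (α - 1)) := by
  have hT_le : T ≤ ⌈T⌉₊ := Nat.le_ceil T
  have hceil_le : (⌈T⌉₊ : ℝ) ≤ T + 1 := (Nat.ceil_lt_add_one hT.le).le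
  have htail (n : ℕ) :
      ∑ i ∈ range n, Δ (⌈T⌉₊ + i) ≤ κ * (T ^ (-α) + T ^ (1 - α) / (α - 1)) := by
    calc ∑ i ∈ range n, Δ (⌈T⌉₊ + i)
        ≤ ∑ i ∈ range n, κ * (T + i) ^ (-α) := by
          gcongr with i
          refine (hdecay _ (by have := Nat.ceil_pos.2 hT; omega)).trans ?_
          rw [Nat.cast_add]
          gcongr κ * ?_
          exact Real.rpow_le_rpow_of_nonpos (by positivity) (by linarith) (by linarith)
      _ ≤ κ * (T ^ (-α) + T ^ (1 - α) / (α - 1)) := by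
          rw [← mul_sum]
          gcongr
          exact sum_range_add_rpow_neg_le hα hT n
  calc ∑' j : ℕ, min u (Δ j)
      ≤ ⌈T⌉₊ * u + κ * (T ^ (-α) + T ^ (1 - α) / (α - 1)) :=
        tsum_min_le_of_sum_tail_le hΔ hu htail
    _ ≤ (T + 1) * u + κ * (T ^ (-α) + T ^ (1 - α) / (α - 1)) := by gcongr

lemma vTilde_sq_le_of_le_rpow_neg (hκ : 0 < κ) (hα : 1 < α) (hΔ : ∀ j, 0 ≤ Δ j)
    (hdecay : ∀ j : ℕ, 1 ≤ j → Δ j ≤ κ * (j : ℝ) ^ (-α)) {u : ℝ} (hu : 0 < u) :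
    vTilde Δ (u ^ 2) ≤ 3 * u + α / (α - 1) * κ ^ (1 / α) * u ^ (1 - 1 / α) := by
  have hα0 : 0 < α := by linarith
  have hα1 : 0 < α - 1 := by linarith
  set T : ℝ := (κ / u) ^ (1 / α) with hT_def
  have hT : 0 < T := by positivity
  have hκT : κ * T ^ (-α) = u := by
    rw [Real.rpow_neg hT.le, hT_def, one_div, Real.rpow_inv_rpow (by positivity) hα0.ne']
    field_simp
  have hκT' : κ * T ^ (1 - α) = T * u := by
    rw [sub_eq_add_neg, Real.rpow_add hT, Real.rpow_one, mul_left_comm, hκT]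
  have hTu : T * u = κ ^ (1 / α) * u ^ (1 - 1 / α) := by
    rw [hT_def, Real.div_rpow hκ.le hu.le, Real.rpow_sub hu, Real.rpow_one, div_mul_eq_mul_div,
      mul_div_assoc]
  calc vTilde Δ (u ^ 2)
      ≤ u + ((T + 1) * u + κ * (T ^ (-α) + T ^ (1 - α) / (α - 1))) := by
        rw [vTilde_sq Δ hu.le]
        gcongr
        exact tsum_min_le_of_le_rpow_neg hκ.le hα hΔ hdecay hu.le hT
    _ = 3 * u + α / (α - 1) * (T * u) := by
        rw [mul_add, ← mul_div_assoc, hκT, hκT']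
        field_simp
        ring
    _ = 3 * u + α / (α - 1) * κ ^ (1 / α) * u ^ (1 - 1 / α) := by rw [hTu, mul_assoc]

end PolynomialDecay

lemma mul_add_mul_rpow_le_sq_div {a b s u α : ℝ} (hα : 0 < α) (hb : 0 ≤ b) (hs : 0 < s)
    (hu : 0 < u) (hlin : 2 * a * s ≤ u) (hpow : (2 * b * s) ^ (α / (α + 1)) ≤ u) :
    a * u + b * u ^ (1 - 1 / α) ≤ u ^ 2 / s := by
  have hpow' : 2 * b * s ≤ u ^ (1 + 1 / α) := by
    have hexp : 1 + 1 / α = (α / (α + 1))⁻¹ := by field_simp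
    rw [hexp]
    exact (Real.le_rpow_inv_iff_of_pos (by positivity) hu.le (by positivity)).2 hpow
  have hsplit : u ^ (1 + 1 / α) * u ^ (1 - 1 / α) = u ^ 2 := by
    rw [← Real.rpow_add hu, ← Real.rpow_natCast]
    congr 1
    push_cast
    ring
  have hlin_half : 2 * a * s * u ≤ u ^ 2 := by
    rw [sq]
    gcongr
  have hpow_half : 2 * b * s * u ^ (1 - 1 / α) ≤ u ^ 2 := by
    rw [← hsplit]
    gcongr
  rw [le_div_iff₀ hs]
  linarith

lemma max_mul_sqrt_rpow_sq_le {a b x : ℝ} (β : ℝ) (hb : 0 ≤ b) (hx : 0 ≤ x) :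
    max (a * √x) ((b * √x) ^ β) ^ 2 ≤ max (a ^ 2) ((b ^ β) ^ 2) * max (x ^ β) x := by
  have hlin : (a * √x) ^ 2 = a ^ 2 * x := by rw [mul_pow, Real.sq_sqrt hx]
  have hpow : ((b * √x) ^ β) ^ 2 = (b ^ β) ^ 2 * x ^ β := by
    rw [Real.mul_rpow hb (Real.sqrt_nonneg x), mul_pow, Real.rpow_pow_comm (Real.sqrt_nonneg x),
      Real.sq_sqrt hx]
  rcases max_choice (a * √x) ((b * √x) ^ β) with h | h
  · rw [h, hlin]
    gcongr
    · exact le_max_left _ _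
    · exact le_max_right _ _
  · rw [h, hpow]
    gcongr
    · exact le_max_right _ _
    · exact le_max_left _ _

theorem lambda_dep_polynomial_decay_general (κ α : ℝ) (hκ : 0 < κ) (hα : 1 < α) :
    ∃ c : ℝ, 0 < c ∧
      ∀ Δ : ℕ → ℝ, (∀ j, 0 ≤ Δ j) →
        (∀ j : ℕ, 1 ≤ j → Δ j ≤ κ * (j : ℝ) ^ (-α)) →
        ∀ x : ℝ, 0 ≤ x →
          ∃ ybar : ℝ, 0 ≤ ybar ∧ vTilde Δ (√x * ybar) ≤ ybar ∧
            √x * ybar ≤ c * max (x ^ (α / (α + 1))) x := by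
  set b : ℝ := α / (α - 1) * κ ^ (1 / α)
  have hb : 0 ≤ b := mul_nonneg (div_nonneg (by linarith) (by linarith)) (by positivity)
  refine ⟨max ((2 * 3) ^ 2) (((2 * b) ^ (α / (α + 1))) ^ 2), by positivity,
    fun Δ hΔ hdecay x hx ↦ ?_⟩
  rcases hx.eq_or_lt with rfl | hx_pos
  · exact ⟨0, le_rfl, by rw [mul_zero, vTilde_zero hΔ], by rw [mul_zero]; positivity⟩
  have hs : 0 < √x := Real.sqrt_pos.2 hx_pos
  set u : ℝ := max (2 * 3 * √x) ((2 * b * √x) ^ (α / (α + 1)))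
  have hu : 0 < u := lt_max_of_lt_left (by positivity)
  have hrate : √x * (u ^ 2 / √x) = u ^ 2 := mul_div_cancel₀ _ hs.ne'
  refine ⟨u ^ 2 / √x, by positivity, ?_, ?_⟩ <;> rw [hrate]
  · exact (vTilde_sq_le_of_le_rpow_neg hκ hα hΔ hdecay hu).trans <|
      mul_add_mul_rpow_le_sq_div (by linarith) hb hs hu (le_max_left _ _) (le_max_right _ _)
  · exact max_mul_sqrt_rpow_sq_le _ (by positivity) hx

/-- **Rate `Λ^dep` under polynomial decay of the dependence coefficients.**
For every `κ > 0` and `α > 1` there is a constant `c_{κ,α} > 0` (depending only on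
`κ` and `α`) such that: for every nonincreasing `Δ : ℕ → [0,∞)` with
`Δ j ≤ κ·j^(−α)` for `j ≥ 1` and every `x ≥ 0`, one can choose `ȳ(x) ≥ 0` with
`Ṽ(√x·ȳ(x)) ≤ ȳ(x)` (where `Ṽ(u) = √u + ∑_j min(√u, Δ j)`), whose associated rate
`Λ^dep(x) = √x·ȳ(x)` satisfies `Λ^dep(x) ≤ c_{κ,α}·max(x^{α/(α+1)}, x)`. -/
theorem lambda_dep_polynomial_decay
    (κ α : ℝ) (hκ : 0 < κ) (hα : 1 < α) :
    ∃ c : ℝ, 0 < c ∧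
      ∀ Δ : ℕ → ℝ, (∀ j, 0 ≤ Δ j) → Antitone Δ →
        (∀ j : ℕ, 1 ≤ j → Δ j ≤ κ * (j : ℝ) ^ (-α)) →
        ∀ x : ℝ, 0 ≤ x →
          ∃ ybar : ℝ, 0 ≤ ybar ∧
            (Real.sqrt (Real.sqrt x * ybar) +
                ∑' j : ℕ, min (Real.sqrt (Real.sqrt x * ybar)) (Δ j)) ≤ ybar ∧
            Real.sqrt x * ybar ≤ c * max (x ^ (α / (α + 1))) x := by
  obtain ⟨c, hc, hrate⟩ := lambda_dep_polynomial_decay_general κ α hκ hα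
  exact ⟨c, hc, fun Δ hΔ _ hdecay ↦ hrate Δ hΔ hdecay⟩
end

section
/- Orlicz-norm bound: let Z be a real-valued random variable on a probability space with ‖Z‖_∞ := esssup|Z| < ∞ and ‖Z‖_1 := E|Z| > 0, and let φ : [0,∞) → [0,∞) be a strictly increasing, convex, differentiable bijection with φ(0) = 0 and lim_{x→∞} φ(x)/x = ∞. Then the Orlicz norm ‖Z‖_{φ,2} := inf{c > 0 : E[φ((|Z|/c)²)] ≤ 1} satisfies ‖Z‖_{φ,2} ≤ ‖Z‖_∞ · φ^{−1}(‖Z‖_∞/‖Z‖_1)^{−1/2}. -/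
open MeasureTheory

/-!
Write `M` for a bound on `|Z|`, `m = E|Z|` and `a = φ⁻¹(M / m)`. The number `c = M / √a` is itself
admissible in the infimum: with `t = |Z| / M ∈ [0, 1]`, convexity and `φ 0 = 0` give
`φ ((|Z| / c)²) = φ (t² a) ≤ t² φ a ≤ t φ a = |Z| / m` almost surely, and the right-hand side has
expectation `1`. The exponent `2` enters only through `t² ≤ t`, so any `p ≥ 1` works.
-/

theorem map_smul_le_smul_of_convexOn {𝕜 E β : Type*} [Ring 𝕜] [PartialOrder 𝕜]
    [IsOrderedAddMonoid 𝕜] [AddCommMonoid E] [Module 𝕜 E] [AddCommMonoid β] [PartialOrder β]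
    [IsOrderedAddMonoid β] [Module 𝕜 β] [PosSMulMono 𝕜 β] {s : Set E} {f : E → β}
    (hf : ConvexOn 𝕜 s f) (h0s : 0 ∈ s) (hf0 : f 0 ≤ 0) {x : E} (hx : x ∈ s) {t : 𝕜}
    (ht0 : 0 ≤ t) (ht1 : t ≤ 1) : f (t • x) ≤ t • f x :=
  calc f (t • x)
      = f (t • x + (1 - t) • (0 : E)) := by rw [smul_zero, add_zero]
    _ ≤ t • f x + (1 - t) • f 0 := hf.2 hx h0s ht0 (sub_nonneg.2 ht1) (add_sub_cancel t 1)
    _ ≤ t • f x := add_le_of_nonpos_right (smul_nonpos_of_nonneg_of_nonpos (sub_nonneg.2 ht1) hf0)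

theorem pos_of_ae_le_of_integral_pos {Ω : Type*} [MeasurableSpace Ω] {μ : Measure Ω}
    {f : Ω → ℝ} {M : ℝ} (hfM : ∀ᵐ ω ∂μ, f ω ≤ M) (hf : 0 < ∫ ω, f ω ∂μ) : 0 < M := by
  by_contra! hM
  exact hf.not_ge (integral_nonpos_of_ae (hfM.mono fun _ hω => hω.trans hM))

section Modular

variable {φ : ℝ → ℝ} {p M c : ℝ}

theorem map_div_rpow_le (hφ_convex : ConvexOn ℝ (Set.Ici 0) φ) (hφ0 : φ 0 = 0)
    (hφ_nonneg : ∀ x, 0 ≤ x → 0 ≤ φ x) (hp : 1 ≤ p) (hM : 0 < M) (hc : 0 ≤ c) {z : ℝ}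
    (hz : 0 ≤ z) (hzM : z ≤ M) : φ ((z / c) ^ p) ≤ z / M * φ ((M / c) ^ p) := by
  have ht0 : 0 ≤ z / M := div_nonneg hz hM.le
  have ht1 : z / M ≤ 1 := (div_le_one hM).2 hzM
  have hMc : 0 ≤ M / c := div_nonneg hM.le hc
  have htp : (z / M) ^ p ≤ z / M := Real.rpow_le_self_of_le_one ht0 ht1 hp
  calc φ ((z / c) ^ p)
      = φ ((z / M) ^ p * (M / c) ^ p) := by
        rw [← Real.mul_rpow ht0 hMc, div_mul_div_cancel₀ hM.ne']
    _ ≤ (z / M) ^ p * φ ((M / c) ^ p) :=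
        map_smul_le_smul_of_convexOn hφ_convex Set.self_mem_Ici hφ0.le (Real.rpow_nonneg hMc p)
          (Real.rpow_nonneg ht0 p) (htp.trans ht1)
    _ ≤ z / M * φ ((M / c) ^ p) :=
        mul_le_mul_of_nonneg_right htp (hφ_nonneg _ (Real.rpow_nonneg hMc p))

variable {Ω : Type*} [MeasurableSpace Ω] {μ : Measure Ω} {Z : Ω → ℝ}

theorem integral_map_abs_div_rpow_le (hφ_convex : ConvexOn ℝ (Set.Ici 0) φ) (hφ0 : φ 0 = 0)
    (hφ_nonneg : ∀ x, 0 ≤ x → 0 ≤ φ x) (hp : 1 ≤ p) (hM : 0 < M) (hc : 0 ≤ c)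
    (hZ : Integrable (fun ω => |Z ω|) μ) (hZM : ∀ᵐ ω ∂μ, |Z ω| ≤ M) :
    ∫ ω, φ ((|Z ω| / c) ^ p) ∂μ ≤ (∫ ω, |Z ω| ∂μ) / M * φ ((M / c) ^ p) := by
  have hdom : ∀ᵐ ω ∂μ, φ ((|Z ω| / c) ^ p) ≤ |Z ω| / M * φ ((M / c) ^ p) :=
    hZM.mono fun ω hω =>
      map_div_rpow_le hφ_convex hφ0 hφ_nonneg hp hM hc (abs_nonneg (Z ω)) hω
  have hnonneg : ∀ ω, 0 ≤ φ ((|Z ω| / c) ^ p) := fun ω => hφ_nonneg _ (by positivity)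
  calc ∫ ω, φ ((|Z ω| / c) ^ p) ∂μ
      ≤ ∫ ω, |Z ω| / M * φ ((M / c) ^ p) ∂μ :=
        integral_mono_of_nonneg (.of_forall hnonneg) ((hZ.div_const M).mul_const _) hdom
    _ = (∫ ω, |Z ω| ∂μ) / M * φ ((M / c) ^ p) := by rw [integral_mul_const, integral_div]

end Modular

section OrliczNorm

variable {Ω : Type*} [MeasurableSpace Ω] {μ : Measure Ω} {Z : Ω → ℝ} {φ : ℝ → ℝ} {p : ℝ}

/-- The Orlicz norm `‖Z‖_{φ,p}`: the infimum of the scales `c > 0` with `∫ φ ((|Z| / c) ^ p) ≤ 1`.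
It is `0` if there is no such scale, and a non-integrable integrand counts as having integral
`0`. -/
noncomputable def orliczNorm (φ : ℝ → ℝ) (p : ℝ) (Z : Ω → ℝ) (μ : Measure Ω) : ℝ :=
  sInf {c : ℝ | 0 < c ∧ ∫ ω, φ ((|Z ω| / c) ^ p) ∂μ ≤ 1}

theorem orliczNorm_le {c : ℝ} (hc : 0 < c) (h : ∫ ω, φ ((|Z ω| / c) ^ p) ∂μ ≤ 1) :
    orliczNorm φ p Z μ ≤ c :=
  csInf_le ⟨0, fun _ hc' => hc'.1.le⟩ ⟨hc, h⟩

theorem orlicz_norm_le_of_bounded_general {M a : ℝ} (hZM : ∀ᵐ ω ∂μ, |Z ω| ≤ M)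
    (hZ_pos : 0 < ∫ ω, |Z ω| ∂μ) (hφ_convex : ConvexOn ℝ (Set.Ici 0) φ) (hφ0 : φ 0 = 0)
    (hφ_nonneg : ∀ x, 0 ≤ x → 0 ≤ φ x) (hp : 1 ≤ p) (ha : 0 ≤ a)
    (hφa : φ a = M / ∫ ω, |Z ω| ∂μ) :
    orliczNorm φ p Z μ ≤ M * (a ^ (1 / p))⁻¹ := by
  have hM : 0 < M := pos_of_ae_le_of_integral_pos hZM hZ_pos
  have ha_pos : 0 < a := ha.lt_of_ne' fun h => (div_pos hM hZ_pos).ne' (by rw [← hφa, h, hφ0])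
  have hc : 0 < M * (a ^ (1 / p))⁻¹ := by positivity
  have hMc : (M / (M * (a ^ (1 / p))⁻¹)) ^ p = a := by
    rw [div_mul_cancel_left₀ hM.ne', inv_inv, one_div, Real.rpow_inv_rpow ha (by positivity)]
  have hZ : Integrable (fun ω => |Z ω|) μ := .of_integral_ne_zero hZ_pos.ne'
  refine orliczNorm_le hc ?_
  calc ∫ ω, φ ((|Z ω| / (M * (a ^ (1 / p))⁻¹)) ^ p) ∂μ
      ≤ (∫ ω, |Z ω| ∂μ) / M * φ a := by
        simpa only [hMc] using
          integral_map_abs_div_rpow_le hφ_convex hφ0 hφ_nonneg hp hM hc.le hZ hZM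
    _ = 1 := by rw [hφa, div_mul_div_cancel₀ hM.ne', div_self hZ_pos.ne']

end OrliczNorm

/-- **Orlicz-norm bound via the `L^∞`- and `L¹`-norms.**
Let `Z` be a real random variable on a probability space with essential supremum
`Zsup = ‖Z‖_∞ < ∞` and `‖Z‖₁ = E|Z| > 0`, and let `φ : [0,∞) → [0,∞)` be a strictly
increasing, convex, differentiable bijection with `φ 0 = 0` and `φ(x)/x → ∞`.
Then the Orlicz norm `‖Z‖_{φ,2} = inf{c > 0 : E[φ((|Z|/c)²)] ≤ 1}` satisfies
`‖Z‖_{φ,2} ≤ ‖Z‖_∞ · φ⁻¹(‖Z‖_∞/‖Z‖₁)^(−1/2)`. -/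
theorem orlicz_norm_le_of_bounded
    {Ω : Type*} [MeasureSpace Ω] [IsProbabilityMeasure (volume : Measure Ω)]
    (Z : Ω → ℝ) (hZ_meas : Measurable Z)
    (Zsup : ℝ)
    (hZsup_bound : ∀ᵐ ω : Ω, |Z ω| ≤ Zsup)
    (hZsup_least : ∀ c : ℝ, (∀ᵐ ω : Ω, |Z ω| ≤ c) → Zsup ≤ c)
    (hZ1_pos : 0 < ∫ ω, |Z ω|)
    (φ : ℝ → ℝ) (hφ0 : φ 0 = 0)
    (hφ_mono : StrictMonoOn φ (Set.Ici (0 : ℝ)))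
    (hφ_convex : ConvexOn ℝ (Set.Ici (0 : ℝ)) φ)
    (hφ_diff : DifferentiableOn ℝ φ (Set.Ioi (0 : ℝ)))
    (hφ_surj : ∀ y : ℝ, 0 ≤ y → ∃ x : ℝ, 0 ≤ x ∧ φ x = y)
    (hφ_superlinear : Filter.Tendsto (fun x => φ x / x) Filter.atTop Filter.atTop)
    (ι : ℝ → ℝ)
    (hι_left : ∀ x : ℝ, 0 ≤ x → ι (φ x) = x)
    (hι_right : ∀ y : ℝ, 0 ≤ y → φ (ι y) = y) :
    sInf {c : ℝ | 0 < c ∧ ∫ ω, φ ((|Z ω| / c) ^ 2) ≤ 1} ≤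
      Zsup * (Real.sqrt (ι (Zsup / ∫ ω, |Z ω|)))⁻¹ := by
  have hZsup : 0 < Zsup := pos_of_ae_le_of_integral_pos hZsup_bound hZ1_pos
  have hφ_nonneg : ∀ x, 0 ≤ x → 0 ≤ φ x := fun x hx =>
    hφ0.symm.trans_le (hφ_mono.monotoneOn Set.self_mem_Ici hx hx)
  obtain ⟨a, ha, hφa⟩ := hφ_surj (Zsup / ∫ ω, |Z ω|) (by positivity)
  rw [← hφa, hι_left a ha]
  simpa only [orliczNorm, Real.rpow_two, Real.sqrt_eq_rpow] using
    orlicz_norm_le_of_bounded_general hZsup_bound hZ1_pos hφ_convex hφ0 hφ_nonneg one_le_two ha hφa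
end

section
/- Let φ : [0,∞) → [0,∞) be a strictly increasing bijection with φ(0) = 0 such that the map y ↦ y/φ(y) is convex and decreasing on (0,∞). Define φ̃(x) := φ^{−1}(1/x)^{−1/2} for x > 0. Then both φ̃² and φ̃ are concave on (0,∞); in particular both are subadditive on (0,∞). -/
/-- `φ̃(x) = φ⁻¹(1/x)^(−1/2)`, the modulus relating the Orlicz norm to the `L¹`-norm. -/
noncomputable def phiTilde (ι : ℝ → ℝ) (x : ℝ) : ℝ := 1 / Real.sqrt (ι (1 / x))

/-!
Put `ψ y = y / φ y` and `g = φ̃²`, that is, `g x = φ⁻¹(x⁻¹)⁻¹`. The inverse of `g` on `(0, ∞)` is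
`t ↦ φ(t⁻¹)⁻¹ = t ψ(t⁻¹)`, the restriction of the perspective `(y, t) ↦ t ψ(t⁻¹ y)` of `ψ` to the
line `y = 1`. It is therefore convex, and it is increasing, so `g` is concave, and so is `φ̃ = √g`.
A nonnegative concave function `h` on `(0, ∞)` is subadditive because `h x / x` is decreasing.
-/

open Set

theorem concaveOn_of_convexOn_of_rightInvOn {𝕜 E F : Type*} [Semiring 𝕜] [PartialOrder 𝕜]
    [AddCommMonoid E] [LinearOrder E] [SMul 𝕜 E] [AddCommMonoid F] [PartialOrder F] [SMul 𝕜 F]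
    {s : Set E} {t : Set F} {f : E → F} {g : F → E} (hf : ConvexOn 𝕜 s f)
    (hf_mono : StrictMonoOn f s) (ht : Convex 𝕜 t) (hg : MapsTo g t s) (hfg : RightInvOn g f t) :
    ConcaveOn 𝕜 t g := by
  refine ⟨ht, fun x hx y hy a b ha hb hab ↦ ?_⟩
  have hz := ht hx hy ha hb hab
  rw [← hf_mono.le_iff_le (hf.1 (hg hx) (hg hy) ha hb hab) (hg hz)]
  calc f (a • g x + b • g y)
      ≤ a • f (g x) + b • f (g y) := hf.2 (hg hx) (hg hy) ha hb hab
    _ = f (g (a • x + b • y)) := by rw [hfg hx, hfg hy, hfg hz]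

section Perspective

variable {𝕜 E β : Type*} [Field 𝕜] [LinearOrder 𝕜] [IsStrictOrderedRing 𝕜]
  [AddCommMonoid β] [PartialOrder β] [Module 𝕜 β] [PosSMulMono 𝕜 β]

theorem convexOn_perspective [AddCommMonoid E] [Module 𝕜 E] {s : Set E} {f : E → β}
    (hf : ConvexOn 𝕜 s f) :
    ConvexOn 𝕜 {p : E × 𝕜 | 0 < p.2 ∧ p.2⁻¹ • p.1 ∈ s} (fun p ↦ p.2 • f (p.2⁻¹ • p.1)) := by
  have average_eq {a b p q : 𝕜} (hp : 0 < p) (hq : 0 < q) (u v : E) :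
      (a * p / (a * p + b * q)) • p⁻¹ • u + (b * q / (a * p + b * q)) • q⁻¹ • v
        = (a * p + b * q)⁻¹ • (a • u + b • v) := by
    match_scalars <;> field_simp
  have scale_pos {a b p q : 𝕜} (hp : 0 < p) (hq : 0 < q) (ha : 0 ≤ a) (hb : 0 ≤ b)
      (hab : a + b = 1) : 0 < a * p + b * q :=
    convex_Ioi (0 : 𝕜) hp hq ha hb hab
  have weights_add {a b p q : 𝕜} (hr : 0 < a * p + b * q) :
      a * p / (a * p + b * q) + b * q / (a * p + b * q) = 1 := by
    rw [← add_div, div_self hr.ne']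
  constructor
  · rintro ⟨u, p⟩ ⟨hp, hu⟩ ⟨v, q⟩ ⟨hq, hv⟩ a b ha hb hab
    have hr := scale_pos hp hq ha hb hab
    refine ⟨hr, ?_⟩
    have := hf.1 hu hv (by positivity) (by positivity) (weights_add hr)
    rwa [average_eq hp hq] at this
  · rintro ⟨u, p⟩ ⟨hp, hu⟩ ⟨v, q⟩ ⟨hq, hv⟩ a b ha hb hab
    have hr := scale_pos hp hq ha hb hab
    have jensen := hf.2 hu hv (by positivity) (by positivity) (weights_add hr)
    rw [average_eq hp hq] at jensen
    calc (a * p + b * q) • f ((a * p + b * q)⁻¹ • (a • u + b • v))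
        ≤ (a * p + b * q) • ((a * p / (a * p + b * q)) • f (p⁻¹ • u)
            + (b * q / (a * p + b * q)) • f (q⁻¹ • v)) := smul_le_smul_of_nonneg_left jensen hr.le
      _ = a • p • f (p⁻¹ • u) + b • q • f (q⁻¹ • v) := by match_scalars <;> field_simp

theorem convexOn_smul_comp_inv {f : 𝕜 → β} (hf : ConvexOn 𝕜 (Ioi 0) f) :
    ConvexOn 𝕜 (Ioi 0) (fun t ↦ t • f t⁻¹) := by
  have hline := (convexOn_perspective hf).comp_affineMap
    ((AffineMap.const 𝕜 𝕜 (1 : 𝕜)).prod (AffineMap.id 𝕜 𝕜))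
  refine (hline.subset (fun t ht ↦ ?_) (convex_Ioi 0)).congr fun t _ ↦ ?_
  · exact ⟨ht, by simpa using ht⟩
  · simp

end Perspective

section Subadditivity

variable {𝕜 : Type*} [Field 𝕜] [LinearOrder 𝕜] [IsStrictOrderedRing 𝕜] {g : 𝕜 → 𝕜}

theorem antitoneOn_div_self_of_concaveOn (hg : ConcaveOn 𝕜 (Ioi 0) g)
    (hg_nonneg : ∀ x > 0, 0 ≤ g x) : AntitoneOn (fun x ↦ g x / x) (Ioi 0) := by
  refine antitoneOn_iff_forall_lt.2 fun x (hx : 0 < x) z (hz : 0 < z) hxz ↦ ?_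
  have chord_from {t : 𝕜} (ht : 0 < t) (htx : t < x) : (x - t) * g z ≤ (z - t) * g x := by
    have hslope := hg.slope_anti_adjacent ht hz htx hxz
    rw [div_le_div_iff₀ (sub_pos.2 hxz) (sub_pos.2 htx)] at hslope
    linarith [mul_nonneg (sub_pos.2 hxz).le (hg_nonneg t ht)]
  -- Let the left end `t` of the chord tend to `0`.
  suffices x * g z ≤ z * g x by
    rw [div_le_div_iff₀ hz hx]
    linarith
  refine le_of_forall_pos_le_add fun ε hε ↦ ?_
  obtain ⟨c, hc, hcε⟩ := exists_pos_mul_lt hε (g z)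
  obtain ⟨t, ht, htc⟩ := exists_between (lt_min hc hx)
  obtain ⟨htc, htx⟩ := lt_min_iff.1 htc
  linarith [chord_from ht htx, mul_le_mul_of_nonneg_left htc.le (hg_nonneg z hz),
    mul_nonneg ht.le (hg_nonneg x hx)]

theorem map_add_le_of_antitoneOn_div_self (hg : AntitoneOn (fun x ↦ g x / x) (Ioi 0)) {x y : 𝕜}
    (hx : 0 < x) (hy : 0 < y) : g (x + y) ≤ g x + g y := by
  have hxy : 0 < x + y := add_pos hx hy
  have hx_le : g (x + y) / (x + y) ≤ g x / x := hg hx hxy (le_add_of_nonneg_right hy.le)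
  have hy_le : g (x + y) / (x + y) ≤ g y / y := hg hy hxy (le_add_of_nonneg_left hx.le)
  calc g (x + y) = g (x + y) / (x + y) * x + g (x + y) / (x + y) * y := by field_simp
    _ ≤ g x / x * x + g y / y * y := by gcongr
    _ = g x + g y := by rw [div_mul_cancel₀ _ hx.ne', div_mul_cancel₀ _ hy.ne']

theorem map_add_le_of_concaveOn (hg : ConcaveOn 𝕜 (Ioi 0) g) (hg_nonneg : ∀ x > 0, 0 ≤ g x)
    {x y : 𝕜} (hx : 0 < x) (hy : 0 < y) : g (x + y) ≤ g x + g y :=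
  map_add_le_of_antitoneOn_div_self (antitoneOn_div_self_of_concaveOn hg hg_nonneg) hx hy

end Subadditivity

theorem concaveOn_sqrt_comp {E : Type*} [AddCommMonoid E] [SMul ℝ E] {s : Set E} {g : E → ℝ}
    (hg : ConcaveOn ℝ s g) (hg_nonneg : ∀ x ∈ s, 0 ≤ g x) : ConcaveOn ℝ s (fun x ↦ √(g x)) :=
  ⟨hg.1, fun x hx y hy _ _ ha hb hab ↦
    (Real.strictConcaveOn_sqrt.concaveOn.2 (hg_nonneg x hx) (hg_nonneg y hy) ha hb hab).trans
      (Real.sqrt_le_sqrt (hg.2 hx hy ha hb hab))⟩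

theorem mapsTo_Ioi_of_leftInvOn {α β : Type*} [PartialOrder α] [Preorder β] {f : α → β} {g : β → α}
    {a : α} (hf : SurjOn f (Ici a) (Ici (f a))) (hgf : LeftInvOn g f (Ici a)) :
    MapsTo g (Ioi (f a)) (Ioi a) := by
  intro y hy
  obtain ⟨x, hx, rfl⟩ := hf (Ioi_subset_Ici_self hy)
  rw [hgf hx]
  exact lt_of_le_of_ne hx fun hax ↦ lt_irrefl (f a) (hax ▸ hy)

section InverseFunction

variable {𝕜 : Type*} [Field 𝕜] [LinearOrder 𝕜] [IsStrictOrderedRing 𝕜] {φ ι : 𝕜 → 𝕜}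

theorem strictMonoOn_inv_comp_inv (hφ : StrictMonoOn φ (Ioi 0))
    (hφ_pos : MapsTo φ (Ioi 0) (Ioi 0)) :
    StrictMonoOn (fun t ↦ (φ t⁻¹)⁻¹) (Ioi 0) :=
  inv_strictAntiOn.comp (hφ.comp_strictAntiOn inv_strictAntiOn fun _ ↦ inv_pos.2)
    fun _ ht ↦ hφ_pos (inv_pos.2 ht)

theorem convexOn_inv_comp_inv (hφ : ConvexOn 𝕜 (Ioi 0) (fun y ↦ y / φ y)) :
    ConvexOn 𝕜 (Ioi 0) (fun t ↦ (φ t⁻¹)⁻¹) :=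
  (convexOn_smul_comp_inv hφ).congr fun t (ht : 0 < t) ↦ by
    simp only [smul_eq_mul, div_eq_mul_inv, mul_inv_cancel_left₀ ht.ne']

theorem concaveOn_inv_comp_inv_of_rightInvOn (hφ : StrictMonoOn φ (Ioi 0))
    (hφ_pos : MapsTo φ (Ioi 0) (Ioi 0)) (hφ_convex : ConvexOn 𝕜 (Ioi 0) (fun y ↦ y / φ y))
    (hι_pos : MapsTo ι (Ioi 0) (Ioi 0)) (hφι : RightInvOn ι φ (Ioi 0)) :
    ConcaveOn 𝕜 (Ioi 0) (fun x ↦ (ι x⁻¹)⁻¹) := by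
  refine concaveOn_of_convexOn_of_rightInvOn (convexOn_inv_comp_inv hφ_convex)
    (strictMonoOn_inv_comp_inv hφ hφ_pos) (convex_Ioi 0)
    (fun x hx ↦ inv_pos.2 (hι_pos (inv_pos.2 hx))) fun x hx ↦ ?_
  rw [inv_inv, hφι (inv_pos.2 hx), inv_inv]

end InverseFunction

theorem phiTilde_eq_sqrt (ι : ℝ → ℝ) (x : ℝ) : phiTilde ι x = √(ι x⁻¹)⁻¹ := by
  rw [phiTilde, one_div, one_div, Real.sqrt_inv]

theorem phiTilde_nonneg (ι : ℝ → ℝ) (x : ℝ) : 0 ≤ phiTilde ι x :=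
  phiTilde_eq_sqrt ι x ▸ Real.sqrt_nonneg _

theorem phiTilde_sq {ι : ℝ → ℝ} {x : ℝ} (h : 0 ≤ ι x⁻¹) : phiTilde ι x ^ 2 = (ι x⁻¹)⁻¹ := by
  rw [phiTilde_eq_sqrt, Real.sq_sqrt (inv_nonneg.2 h)]

/-- **Concavity (hence subadditivity) of `φ̃` and `φ̃²`.**
Let `φ : [0,∞) → [0,∞)` be a strictly increasing bijection with `φ 0 = 0` such that
`y ↦ y / φ y` is convex and decreasing on `(0,∞)`, and let `ι = φ⁻¹`.  Then
`φ̃² (x) = φ⁻¹(1/x)⁻¹` and `φ̃` are both concave on `(0,∞)`, and in particular both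
are subadditive on `(0,∞)`. -/
theorem phiTilde_concave_subadditive
    (φ : ℝ → ℝ) (hφ0 : φ 0 = 0)
    (hφ_mono : StrictMonoOn φ (Set.Ici (0 : ℝ)))
    (hφ_surj : ∀ y : ℝ, 0 ≤ y → ∃ x : ℝ, 0 ≤ x ∧ φ x = y)
    (hratio_convex : ConvexOn ℝ (Set.Ioi (0 : ℝ)) (fun y => y / φ y))
    (hratio_anti : AntitoneOn (fun y => y / φ y) (Set.Ioi (0 : ℝ)))
    (ι : ℝ → ℝ)
    (hι_left : ∀ x : ℝ, 0 ≤ x → ι (φ x) = x)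
    (hι_right : ∀ y : ℝ, 0 ≤ y → φ (ι y) = y) :
    ConcaveOn ℝ (Set.Ioi (0 : ℝ)) (fun x => phiTilde ι x ^ 2) ∧
      ConcaveOn ℝ (Set.Ioi (0 : ℝ)) (phiTilde ι) ∧
      (∀ x > (0:ℝ), ∀ y > (0:ℝ),
        phiTilde ι (x + y) ^ 2 ≤ phiTilde ι x ^ 2 + phiTilde ι y ^ 2) ∧
      (∀ x > (0:ℝ), ∀ y > (0:ℝ),
        phiTilde ι (x + y) ≤ phiTilde ι x + phiTilde ι y) := by
  have hφ_pos : MapsTo φ (Ioi 0) (Ioi 0) := fun y (hy : 0 < y) ↦ by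
    simpa only [hφ0, mem_Ioi] using hφ_mono self_mem_Ici hy.le hy
  have hι_pos : MapsTo ι (Ioi 0) (Ioi 0) := by
    simpa only [hφ0] using mapsTo_Ioi_of_leftInvOn (f := φ) (hφ0.symm ▸ hφ_surj) hι_left
  have hinv_nonneg : ∀ x > 0, 0 ≤ ι x⁻¹ := fun x hx ↦ (hι_pos (inv_pos.2 hx)).le
  have hinv_concave : ConcaveOn ℝ (Ioi 0) (fun x ↦ (ι x⁻¹)⁻¹) :=
    concaveOn_inv_comp_inv_of_rightInvOn (hφ_mono.mono Ioi_subset_Ici_self) hφ_pos hratio_convex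
      hι_pos fun y hy ↦ hι_right y (mem_Ioi.1 hy).le
  have hsq_concave : ConcaveOn ℝ (Ioi 0) (fun x ↦ phiTilde ι x ^ 2) :=
    hinv_concave.congr fun x hx ↦ (phiTilde_sq (hinv_nonneg x hx)).symm
  have hconcave : ConcaveOn ℝ (Ioi 0) (phiTilde ι) :=
    (concaveOn_sqrt_comp hsq_concave fun x _ ↦ sq_nonneg _).congr
      fun x _ ↦ Real.sqrt_sq (phiTilde_nonneg ι x)
  exact ⟨hsq_concave, hconcave,
    fun _ hx _ hy ↦ map_add_le_of_concaveOn hsq_concave (fun _ _ ↦ sq_nonneg _) hx hy,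
    fun _ hx _ hy ↦ map_add_le_of_concaveOn hconcave (fun x _ ↦ phiTilde_nonneg ι x) hx hy⟩
end

section
/- Let φ : [0,∞) → [0,∞) be a strictly increasing, convex, differentiable bijection with φ(0) = 0, c₀ := sup_{y>0} φ'(y)·y/φ(y) < ∞, and such that y ↦ y/φ(y) is convex and decreasing on (0,∞). Define φ*(y) := sup_{w>0}{wy − φ(w)} and assume ψ(x) := φ*(x)·x is a strictly increasing bijection of [0,∞). Then for every x > 0, sup_{z>0}{ √x·z − φ(1/z²)^{−1} } ≤ (4c₀)²·ψ^{−1}(1/x)·x. (The left-hand side equals the convex conjugate (φ̃^{−1})*(√x) of the inverse of φ̃(u) := φ^{−1}(1/u)^{−1/2}, and the right-hand side is at most (4c₀)²·Λ^mix(x) with Λ^mix(x) := ⌈ψ^{−1}(x^{−1})⌉·x.) -/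
/-!
Put `u = ψ⁻¹(1/x)`, so that `φ*(u) · u = 1/x`, and `y = 1/z²`. The bound holds even without the
factor `(4c₀)²`, by comparing `z` with `√x u`.

* If `z ≤ √x u`, then already `√x z ≤ u x`.
* Otherwise `y u < φ*(u)`, so some `w` satisfies `y u < w u - φ(w)`. Hence `y < w` and
  `φ(w)/w < u`, and since `φ(y)/y` is nondecreasing, `φ(y) ≤ y u`. This gives
  `φ(y)⁻¹ ≥ z²/u ≥ √x z`, and the left-hand side is nonpositive.

The factor can then be put back because `c₀ ≥ 1`: convexity and `φ(0) = 0` give `φ(y) ≤ φ'(y) y`.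
-/

section

variable {φ : ℝ → ℝ}

theorem one_le_of_convexOn_of_deriv_mul_le {S : Set ℝ} (hφ : ConvexOn ℝ S φ) (h0S : 0 ∈ S)
    (hφ0 : φ 0 ≤ 0) {c y : ℝ} (hyS : y ∈ S) (hy : 0 < y) (hφy : 0 < φ y)
    (hdiff : DifferentiableAt ℝ φ y) (hc : deriv φ y * y ≤ c * φ y) : 1 ≤ c := by
  have hslope : (φ y - φ 0) / (y - 0) ≤ deriv φ y := by
    simpa only [slope_def_field] using hφ.slope_le_deriv h0S hyS hy hdiff
  have htangent : φ y - φ 0 ≤ deriv φ y * y := by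
    rwa [sub_zero, div_le_iff₀ hy] at hslope
  exact le_of_mul_le_mul_right (by linarith) hφy

theorem le_mul_of_mul_lt_conjugate (hφ_pos : ∀ y, 0 < y → 0 < φ y)
    (hratio_anti : AntitoneOn (fun y => y / φ y) (Set.Ioi (0 : ℝ))) {u m y : ℝ}
    (hm : IsLUB {a : ℝ | ∃ w > 0, a = w * u - φ w} m) (hu : 0 ≤ u) (hy : 0 < y)
    (hyu : y * u < m) : φ y ≤ y * u := by
  obtain ⟨_, ⟨w, hw, rfl⟩, hyw⟩ := (lt_isLUB_iff hm).1 hyu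
  have hφw := hφ_pos w hw
  have hy_lt_w : y < w := lt_of_mul_lt_mul_right (by linarith) hu
  have hφw_le : φ w ≤ w * u := by linarith [mul_nonneg hy.le hu]
  have hcross : w * φ y ≤ y * φ w :=
    (div_le_div_iff₀ hφw (hφ_pos y hy)).1 (hratio_anti hy hw hy_lt_w.le)
  refine le_of_mul_le_mul_left ?_ hw
  calc w * φ y ≤ y * φ w := hcross
    _ ≤ y * (w * u) := by gcongr
    _ = w * (y * u) := by ring

theorem mul_sub_inv_le_of_conjugate_mul_eq (hφ_pos : ∀ y, 0 < y → 0 < φ y)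
    (hratio_anti : AntitoneOn (fun y => y / φ y) (Set.Ioi (0 : ℝ))) {r u m z : ℝ}
    (hm : IsLUB {a : ℝ | ∃ w > 0, a = w * u - φ w} m) (hr : 0 < r) (hu : 0 < u) (hz : 0 < z)
    (hmu : m * u = (r ^ 2)⁻¹) : r * z - (φ (1 / z ^ 2))⁻¹ ≤ u * r ^ 2 := by
  have hφy : 0 < φ (1 / z ^ 2) := hφ_pos _ (by positivity)
  rcases le_or_gt z (r * u) with hzu | huz
  · calc r * z - (φ (1 / z ^ 2))⁻¹ ≤ r * z := sub_le_self _ (inv_nonneg.2 hφy.le)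
      _ ≤ r * (r * u) := by gcongr
      _ = u * r ^ 2 := by ring
  · have hyu : 1 / z ^ 2 * u < m := by
      refine lt_of_mul_lt_mul_right ?_ hu.le
      calc 1 / z ^ 2 * u * u = (r * u) ^ 2 / z ^ 2 * (r ^ 2)⁻¹ := by field_simp
        _ < 1 * (r ^ 2)⁻¹ := by
          gcongr
          rw [div_lt_one (by positivity)]
          gcongr
        _ = m * u := by rw [one_mul, hmu]
    have hφ_le : φ (1 / z ^ 2) ≤ 1 / z ^ 2 * u :=
      le_mul_of_mul_lt_conjugate hφ_pos hratio_anti hm hu.le (by positivity) hyu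
    have hrz_le : r * z ≤ (φ (1 / z ^ 2))⁻¹ :=
      calc r * z = r * u * z / u := by field_simp
        _ ≤ z * z / u := by gcongr
        _ = (1 / z ^ 2 * u)⁻¹ := by field_simp
        _ ≤ (φ (1 / z ^ 2))⁻¹ := by gcongr
    exact (sub_nonpos.2 hrz_le).trans (by positivity)

end

theorem conjugate_phiTildeInv_le_lambda_general
    (φ : ℝ → ℝ) (hφ_pos : ∀ y : ℝ, 0 < y → 0 < φ y)
    (hratio_anti : AntitoneOn (fun y => y / φ y) (Set.Ioi (0 : ℝ)))
    (φstar : ℝ → ℝ)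
    (hφstar : ∀ y : ℝ, 0 ≤ y → IsLUB {z : ℝ | ∃ w > 0, z = w * y - φ w} (φstar y))
    (ψinv : ℝ → ℝ)
    (hψ_right : ∀ y : ℝ, 0 ≤ y → φstar (ψinv y) * ψinv y = y)
    (hψ_nonneg : ∀ y : ℝ, 0 ≤ y → 0 ≤ ψinv y)
    (x : ℝ) (hx : 0 < x) :
    ∀ z > (0 : ℝ), Real.sqrt x * z - (φ (1 / z ^ 2))⁻¹ ≤ ψinv x⁻¹ * x := by
  intro z hz
  have hx_inv : 0 < x⁻¹ := inv_pos.2 hx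
  have hψ : φstar (ψinv x⁻¹) * ψinv x⁻¹ = x⁻¹ := hψ_right _ hx_inv.le
  have hu : 0 < ψinv x⁻¹ :=
    (hψ_nonneg _ hx_inv.le).lt_of_ne' (right_ne_zero_of_mul (hψ.trans_ne hx_inv.ne'))
  have hbound := mul_sub_inv_le_of_conjugate_mul_eq hφ_pos hratio_anti (hφstar _ hu.le)
    (Real.sqrt_pos.2 hx) hu hz (by rw [Real.sq_sqrt hx.le, hψ])
  rwa [Real.sq_sqrt hx.le] at hbound

/-- **Unification of `(φ̃⁻¹)*(√x)` and the rate function `Λ^mix`.**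
Let `φ : [0,∞) → [0,∞)` be a strictly increasing, convex, differentiable bijection
with `φ 0 = 0`, `c₀ ≥ sup_{y>0} φ'(y)·y/φ(y)`, and `y ↦ y/φ(y)` convex and
decreasing on `(0,∞)`.  With `φ*` the convex conjugate of `φ` and
`ψ(x) = φ*(x)·x` a strictly increasing bijection of `[0,∞)` with inverse `ψinv`,
one has for every `x > 0` and `z > 0`:
`√x·z − φ(1/z²)⁻¹ ≤ (4c₀)²·ψ⁻¹(1/x)·x`
(i.e. `(φ̃⁻¹)*(√x) ≤ (4c₀)²·ψ⁻¹(1/x)·x ≤ (4c₀)²·Λ^mix(x)`). -/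
theorem conjugate_phiTildeInv_le_lambda
    (φ : ℝ → ℝ) (hφ0 : φ 0 = 0)
    (hφ_mono : StrictMonoOn φ (Set.Ici (0 : ℝ)))
    (hφ_convex : ConvexOn ℝ (Set.Ici (0 : ℝ)) φ)
    (hφ_diff : DifferentiableOn ℝ φ (Set.Ioi (0 : ℝ)))
    (hφ_surj : ∀ y : ℝ, 0 ≤ y → ∃ x : ℝ, 0 ≤ x ∧ φ x = y)
    (c₀ : ℝ) (hc₀ : ∀ y : ℝ, 0 < y → deriv φ y * y ≤ c₀ * φ y)
    (hratio_convex : ConvexOn ℝ (Set.Ioi (0 : ℝ)) (fun y => y / φ y))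
    (hratio_anti : AntitoneOn (fun y => y / φ y) (Set.Ioi (0 : ℝ)))
    (φstar : ℝ → ℝ)
    (hφstar : ∀ y : ℝ, 0 ≤ y → IsLUB {z : ℝ | ∃ w > 0, z = w * y - φ w} (φstar y))
    (ψinv : ℝ → ℝ)
    (hψ_left : ∀ u : ℝ, 0 ≤ u → ψinv (φstar u * u) = u)
    (hψ_right : ∀ y : ℝ, 0 ≤ y → φstar (ψinv y) * ψinv y = y)
    (hψ_nonneg : ∀ y : ℝ, 0 ≤ y → 0 ≤ ψinv y)
    (x : ℝ) (hx : 0 < x) :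
    ∀ z > (0:ℝ), Real.sqrt x * z - (φ (1 / z ^ 2))⁻¹ ≤
      (4 * c₀) ^ 2 * (ψinv x⁻¹ * x) := by
  intro z hz
  have hφ_pos : ∀ y : ℝ, 0 < y → 0 < φ y := fun y hy =>
    hφ0.symm.trans_lt (hφ_mono Set.self_mem_Ici hy.le hy)
  have hc₀_ge : 1 ≤ c₀ :=
    one_le_of_convexOn_of_deriv_mul_le hφ_convex Set.self_mem_Ici hφ0.le
      (Set.mem_Ici.2 zero_le_one) one_pos (hφ_pos 1 one_pos)
      (hφ_diff.differentiableAt (Ioi_mem_nhds one_pos)) (hc₀ 1 one_pos)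
  have hu : 0 ≤ ψinv x⁻¹ * x := mul_nonneg (hψ_nonneg _ (inv_pos.2 hx).le) hx.le
  calc √x * z - (φ (1 / z ^ 2))⁻¹ ≤ ψinv x⁻¹ * x :=
        conjugate_phiTildeInv_le_lambda_general φ hφ_pos hratio_anti φstar hφstar ψinv hψ_right
          hψ_nonneg x hx z hz
    _ ≤ (4 * c₀) ^ 2 * (ψinv x⁻¹ * x) :=
        le_mul_of_one_le_left hu (one_le_pow₀ (by linarith))
end

section
/- Let φ : [0,∞) → [0,∞) be a strictly increasing, convex, differentiable bijection with φ(0) = 0 whose conjugate φ*(y) := sup_{x>0}{xy − φ(x)} is finite-valued and for which ψ(x) := φ*(x)·x is a strictly increasing bijection of [0,∞). Let β : ℕ₀ → [0,1] be nonincreasing with β(0) = 1 and C := Σ_{k=0}^∞ (φ*(k+1) − φ*(k))·β(k) < ∞. Define q*(x) := min{q ∈ ℕ, q ≥ 1 : β(q) ≤ q·x} and Λ^mix(x) := ⌈ψ^{−1}(x^{−1})⌉·x. Then for every x > 0, q*(x)·x ≤ 2·max{C,1}·Λ^mix(x). -/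
/-!
The conjugate `φ*` is monotone on `[0, ∞)` with `φ* 0 ≤ 0`, and `β` is nonincreasing, so telescoping
gives, for every integer `q ≥ t ≥ 0`,
`φ* t * β q ≤ φ* q * β q ≤ ∑_{k < q} (φ* (k + 1) - φ* k) * β k ≤ C`.
For `t = ψ⁻¹(x⁻¹)`, that is `φ* t * t = x⁻¹`, this reads `β q ≤ C * t * x`. Hence the integer
`q = ⌈max C 1 * ⌈t⌉⌉`, which is at least `t`, satisfies `β q ≤ q * x`, and rounding up at most
doubles a number that is at least `1`.
-/

section Telescoping

variable {R : Type*} [Ring R] [PartialOrder R] [IsOrderedRing R] {f β : ℕ → R}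

theorem sub_mul_le_sum_range_sub_mul (hf : Monotone f) (hβ : Antitone β) (q : ℕ) :
    (f q - f 0) * β q ≤ ∑ k ∈ Finset.range q, (f (k + 1) - f k) * β k := by
  rw [← Finset.sum_range_sub, Finset.sum_mul]
  refine Finset.sum_le_sum fun k hk => ?_
  exact mul_le_mul_of_nonneg_left (hβ (Finset.mem_range.1 hk).le) (sub_nonneg.2 (hf k.le_succ))

theorem sub_mul_le_of_hasSum_sub_mul [TopologicalSpace R] [OrderClosedTopology R] {C : R}
    (hf : Monotone f) (hβ : Antitone β) (hβ_nonneg : ∀ k, 0 ≤ β k)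
    (hC : HasSum (fun k => (f (k + 1) - f k) * β k) C) (q : ℕ) :
    (f q - f 0) * β q ≤ C :=
  (sub_mul_le_sum_range_sub_mul hf hβ q).trans <|
    sum_le_hasSum _ (fun k _ => mul_nonneg (sub_nonneg.2 (hf k.le_succ)) (hβ_nonneg k)) hC

end Telescoping

/-- `φstar` is the convex conjugate `φ*(y) = sup_{u > 0} (u * y - φ u)` of `φ` on `[0, ∞)`. Asking
for a least upper bound makes finiteness of the supremum part of the notion. -/
def IsConjugate (φ φstar : ℝ → ℝ) : Prop :=
  ∀ y : ℝ, 0 ≤ y → IsLUB {z : ℝ | ∃ u > 0, z = u * y - φ u} (φstar y)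

namespace IsConjugate

variable {φ φstar : ℝ → ℝ}

theorem monotoneOn (h : IsConjugate φ φstar) : MonotoneOn φstar (Set.Ici 0) := by
  intro a ha b hb hab
  refine (h a ha).2 ?_
  rintro _ ⟨u, hu, rfl⟩
  calc u * a - φ u ≤ u * b - φ u := by gcongr
    _ ≤ φstar b := (h b hb).1 ⟨u, hu, rfl⟩

theorem apply_zero_nonpos (h : IsConjugate φ φstar) (hφ : ∀ u, 0 < u → 0 ≤ φ u) :
    φstar 0 ≤ 0 := by
  refine (h 0 le_rfl).2 ?_
  rintro _ ⟨u, hu, rfl⟩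
  simpa using hφ u hu

end IsConjugate

/-- The block length `q*(x) = min {q ≥ 1 : β q ≤ q * x}`. The set is nonempty whenever `β` is
bounded above and `x > 0`; if it is empty, `sInf` returns `0`. -/
noncomputable def qstar (β : ℕ → ℝ) (x : ℝ) : ℕ :=
  sInf {q : ℕ | 1 ≤ q ∧ β q ≤ (q : ℝ) * x}

theorem qstar_le_two_mul {β : ℕ → ℝ} {x r : ℝ} (hx : 0 ≤ x) (hr : 2⁻¹ ≤ r)
    (hβ : β ⌈r⌉₊ ≤ r * x) : (qstar β x : ℝ) ≤ 2 * r := by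
  have hceil_pos : 1 ≤ ⌈r⌉₊ := Nat.ceil_pos.2 (by linarith)
  have hβ_ceil : β ⌈r⌉₊ ≤ (⌈r⌉₊ : ℝ) * x :=
    hβ.trans (mul_le_mul_of_nonneg_right (Nat.le_ceil r) hx)
  calc (qstar β x : ℝ) ≤ ⌈r⌉₊ := Nat.cast_le.2 (Nat.sInf_le ⟨hceil_pos, hβ_ceil⟩)
    _ ≤ 2 * r := Nat.ceil_le_two_mul hr

section Rate

variable {g : ℝ → ℝ} {β : ℕ → ℝ} {C x t : ℝ}

theorem mul_le_of_hasSum_sub_mul (hg : MonotoneOn g (Set.Ici 0)) (hg_zero : g 0 ≤ 0)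
    (hβ : Antitone β) (hβ_nonneg : ∀ k, 0 ≤ β k)
    (hC : HasSum (fun k : ℕ => (g ((k : ℝ) + 1) - g (k : ℝ)) * β k) C)
    (ht : 0 ≤ t) {q : ℕ} (htq : t ≤ q) : g t * β q ≤ C := by
  have hg_nat : Monotone fun k : ℕ => g k := fun a b hab =>
    hg (Set.mem_Ici.2 a.cast_nonneg) (Set.mem_Ici.2 b.cast_nonneg) (Nat.cast_le.2 hab)
  have hgt : g t ≤ g q - g (0 : ℕ) := by
    have hg_le : g t ≤ g q := hg ht (Set.mem_Ici.2 q.cast_nonneg) htq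
    rw [Nat.cast_zero]
    linarith
  calc g t * β q ≤ (g q - g (0 : ℕ)) * β q := mul_le_mul_of_nonneg_right hgt (hβ_nonneg q)
    _ ≤ C := sub_mul_le_of_hasSum_sub_mul hg_nat hβ hβ_nonneg (by simpa using hC) q

theorem qstar_le_lambda_mix_general (hg : MonotoneOn g (Set.Ici 0)) (hg_zero : g 0 ≤ 0)
    (hβ : Antitone β) (hβ_nonneg : ∀ k, 0 ≤ β k)
    (hC : HasSum (fun k : ℕ => (g ((k : ℝ) + 1) - g (k : ℝ)) * β k) C)
    (hx : 0 < x) (ht : 0 ≤ t) (hgt : g t * t = x⁻¹) :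
    (qstar β x : ℝ) * x ≤ 2 * max C 1 * ((⌈t⌉₊ : ℝ) * x) := by
  have ht_pos : 0 < t := ht.lt_of_ne' (right_ne_zero_of_mul (hgt ▸ inv_ne_zero hx.ne'))
  have hone_le_ceil : (1 : ℝ) ≤ ⌈t⌉₊ := Nat.one_le_cast.2 (Nat.ceil_pos.2 ht_pos)
  set r : ℝ := max C 1 * ⌈t⌉₊ with hr
  have hceil_le : (⌈t⌉₊ : ℝ) ≤ r := le_mul_of_one_le_left (Nat.cast_nonneg _) (le_max_right C 1)
  have ht_le : t ≤ ⌈r⌉₊ := (Nat.le_ceil t).trans (hceil_le.trans (Nat.le_ceil r))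
  have hβ_le : β ⌈r⌉₊ ≤ r * x :=
    calc β ⌈r⌉₊ = g t * β ⌈r⌉₊ * (t * x) := by
          linear_combination -(β ⌈r⌉₊ * x) * hgt - β ⌈r⌉₊ * inv_mul_cancel₀ hx.ne'
      _ ≤ C * (t * x) := by
          gcongr
          exact mul_le_of_hasSum_sub_mul hg hg_zero hβ hβ_nonneg hC ht ht_le
      _ ≤ max C 1 * (⌈t⌉₊ * x) := by
          gcongr
          exacts [le_max_left C 1, Nat.le_ceil t]
      _ = r * x := by rw [hr, mul_assoc]
  calc (qstar β x : ℝ) * x ≤ 2 * r * x := by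
        gcongr
        exact qstar_le_two_mul hx.le (by linarith) hβ_le
    _ = 2 * max C 1 * (⌈t⌉₊ * x) := by rw [hr]; ring

end Rate

/-- **Bound on `q*(x)·x` by the rate function `Λ^mix`.**
Let `φ : [0,∞) → [0,∞)` be a strictly increasing convex differentiable bijection with
`φ 0 = 0`, with finite convex conjugate `φ*` (characterised by `IsLUB`), and assume
`ψ(x) = φ*(x)·x` is a strictly increasing bijection of `[0,∞)` with inverse `ψinv`.
Let `β : ℕ → [0,1]` be nonincreasing with `β 0 = 1` and
`C = ∑_k (φ*(k+1) − φ*(k))·β k < ∞`.  With `q*(x) = min{q ≥ 1 : β q ≤ q·x}` and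
`Λ^mix(x) = ⌈ψ⁻¹(x⁻¹)⌉·x`, one has `q*(x)·x ≤ 2·max(C,1)·Λ^mix(x)` for all `x > 0`. -/
theorem qstar_le_lambda_mix
    (φ : ℝ → ℝ) (hφ0 : φ 0 = 0)
    (hφ_mono : StrictMonoOn φ (Set.Ici (0 : ℝ)))
    (hφ_convex : ConvexOn ℝ (Set.Ici (0 : ℝ)) φ)
    (hφ_diff : DifferentiableOn ℝ φ (Set.Ioi (0 : ℝ)))
    (hφ_surj : ∀ y : ℝ, 0 ≤ y → ∃ x : ℝ, 0 ≤ x ∧ φ x = y)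
    (φstar : ℝ → ℝ)
    (hφstar : ∀ y : ℝ, 0 ≤ y → IsLUB {z : ℝ | ∃ x > 0, z = x * y - φ x} (φstar y))
    (ψinv : ℝ → ℝ)
    (hψ_left : ∀ x : ℝ, 0 ≤ x → ψinv (φstar x * x) = x)
    (hψ_right : ∀ y : ℝ, 0 ≤ y → φstar (ψinv y) * ψinv y = y)
    (hψ_nonneg : ∀ y : ℝ, 0 ≤ y → 0 ≤ ψinv y)
    (β : ℕ → ℝ) (hβ_anti : Antitone β) (hβ_mem : ∀ k, β k ∈ Set.Icc (0 : ℝ) 1)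
    (hβ0 : β 0 = 1)
    (C : ℝ)
    (hC : HasSum (fun k : ℕ => (φstar ((k : ℝ) + 1) - φstar (k : ℝ)) * β k) C)
    (x : ℝ) (hx : 0 < x) :
    ((sInf {q : ℕ | 1 ≤ q ∧ β q ≤ (q : ℝ) * x} : ℕ) : ℝ) * x ≤
      2 * max C 1 * ((⌈ψinv x⁻¹⌉₊ : ℝ) * x) := by
  have hφ_nonneg : ∀ u, 0 < u → 0 ≤ φ u := fun u hu =>
    hφ0 ▸ (hφ_mono Set.self_mem_Ici hu.le hu).le
  have hx_inv : 0 ≤ x⁻¹ := inv_nonneg.2 hx.le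
  exact qstar_le_lambda_mix_general (IsConjugate.monotoneOn hφstar)
    (IsConjugate.apply_zero_nonpos hφstar hφ_nonneg) hβ_anti (fun k => (hβ_mem k).1) hC hx
    (hψ_nonneg _ hx_inv) (hψ_right _ hx_inv)
end

section
/- Let r₁, r₂, P > 0, b ≥ 0, and let φ : [0,∞) → [0,∞) be a concave, strictly increasing bijection with φ(0) = 0 (so that φ^{−1} is convex). If a ≥ 0 satisfies |a − b| ≤ r₁·φ(r₂·a) + P, then for every η > 0, a ≤ (η/r₂)·(φ^{−1})*((1+η)/η · r₁·r₂) + (1+η)·(b + P), where (φ^{−1})*(y) := sup_{x>0}{xy − φ^{−1}(x)} is the convex conjugate of φ^{−1}. -/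
/-!
Put `u = (1 + η) / η * (r₁ * r₂)`. Testing the supremum `(φ⁻¹)* u` at the point `φ t` gives the
Fenchel–Young inequality `φ t * u ≤ t + (φ⁻¹)* u` for `t > 0`. It forces `0 ≤ (φ⁻¹)* u` because `t`
may be arbitrarily small, and so it holds at `t = 0` as well. At `t = r₂ * a`, after multiplication
by `η / r₂`, it says that `(1 + η) * (r₁ * φ (r₂ * a))` is at most `η * a + (η / r₂) * (φ⁻¹)* u`.
The term `η * a` is absorbed when `a ≤ r₁ * φ (r₂ * a) + (b + P)` is multiplied by `1 + η`.
-/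

theorem pos_of_leftInvOn_Ici {α β : Type*} [Preorder α] [Zero α] [PartialOrder β] [Zero β]
    {φ : α → β} {ι : β → α} (hφ0 : φ 0 = 0) (hφ_maps : Set.MapsTo φ (Set.Ici 0) (Set.Ici 0))
    (hι : Set.LeftInvOn ι φ (Set.Ici 0)) {t : α} (ht : 0 < t) : 0 < φ t := by
  have hφt_ne : φ t ≠ φ 0 := hι.injOn.ne ht.le Set.self_mem_Ici ht.ne'
  exact (hφ_maps ht.le).lt_of_ne (hφ0 ▸ hφt_ne.symm)

section

variable {𝕜 : Type*} [Field 𝕜] [LinearOrder 𝕜]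

/-- `c` is the value at `u` of the convex conjugate `ι* u = sup_{x > 0} (x * u - ι x)`, where only
positive `x` compete. It is a predicate on `c` because the supremum need not exist in `𝕜`. -/
def IsConvexConjugateAt (ι : 𝕜 → 𝕜) (u c : 𝕜) : Prop :=
  IsLUB {z : 𝕜 | ∃ x > 0, z = x * u - ι x} c

variable [IsStrictOrderedRing 𝕜]

namespace IsConvexConjugateAt

variable {φ ι : 𝕜 → 𝕜} {u c : 𝕜}

theorem fenchel_young_of_pos (hc : IsConvexConjugateAt ι u c) (hφ0 : φ 0 = 0)
    (hφ_maps : Set.MapsTo φ (Set.Ici 0) (Set.Ici 0)) (hι : Set.LeftInvOn ι φ (Set.Ici 0))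
    {t : 𝕜} (ht : 0 < t) : φ t * u ≤ t + c := by
  have hle : φ t * u - ι (φ t) ≤ c := hc.1 ⟨φ t, pos_of_leftInvOn_Ici hφ0 hφ_maps hι ht, rfl⟩
  rwa [hι ht.le, sub_le_iff_le_add'] at hle

theorem nonneg (hc : IsConvexConjugateAt ι u c) (hφ0 : φ 0 = 0)
    (hφ_maps : Set.MapsTo φ (Set.Ici 0) (Set.Ici 0)) (hι : Set.LeftInvOn ι φ (Set.Ici 0))
    (hu : 0 ≤ u) : 0 ≤ c := by
  refine le_of_forall_pos_le_add fun t ht => ?_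
  calc
    0 ≤ φ t * u := mul_nonneg (hφ_maps ht.le) hu
    _ ≤ t + c := hc.fenchel_young_of_pos hφ0 hφ_maps hι ht
    _ = c + t := add_comm t c

theorem fenchel_young (hc : IsConvexConjugateAt ι u c) (hφ0 : φ 0 = 0)
    (hφ_maps : Set.MapsTo φ (Set.Ici 0) (Set.Ici 0)) (hι : Set.LeftInvOn ι φ (Set.Ici 0))
    (hu : 0 ≤ u) {t : 𝕜} (ht : 0 ≤ t) : φ t * u ≤ t + c := by
  rcases ht.eq_or_lt with rfl | ht_pos
  · simpa [hφ0] using hc.nonneg hφ0 hφ_maps hι hu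
  · exact hc.fenchel_young_of_pos hφ0 hφ_maps hι ht_pos

end IsConvexConjugateAt

theorem self_bounding_risk_lemma_general {φ ι : 𝕜 → 𝕜} (hφ0 : φ 0 = 0)
    (hφ_maps : Set.MapsTo φ (Set.Ici 0) (Set.Ici 0)) (hι : Set.LeftInvOn ι φ (Set.Ici 0))
    {r₁ r₂ η a d c : 𝕜} (hr₁ : 0 ≤ r₁) (hr₂ : 0 < r₂) (hη : 0 < η) (ha : 0 ≤ a)
    (hc : IsConvexConjugateAt ι ((1 + η) / η * (r₁ * r₂)) c)
    (hineq : a ≤ r₁ * φ (r₂ * a) + d) :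
    a ≤ (η / r₂) * c + (1 + η) * d := by
  have young : φ (r₂ * a) * ((1 + η) / η * (r₁ * r₂)) ≤ r₂ * a + c :=
    hc.fenchel_young hφ0 hφ_maps hι (by positivity) (by positivity)
  have scaled_young : (1 + η) * (r₁ * φ (r₂ * a)) ≤ η * a + (η / r₂) * c := by
    calc
      (1 + η) * (r₁ * φ (r₂ * a))
          = (η / r₂) * (φ (r₂ * a) * ((1 + η) / η * (r₁ * r₂))) := by field_simp
      _ ≤ (η / r₂) * (r₂ * a + c) := by gcongr
      _ = η * a + (η / r₂) * c := by field_simp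
  have scaled_ineq : (1 + η) * a ≤ (1 + η) * (r₁ * φ (r₂ * a) + d) := by gcongr
  linarith

end

/-- **Deterministic self-bounding lemma.**
Let `r₁, r₂, P > 0`, `b ≥ 0`, and let `φ : [0,∞) → [0,∞)` be a concave strictly
increasing bijection with `φ 0 = 0`, with inverse `ι = φ⁻¹` (so `ι` is convex).
If `a ≥ 0` satisfies `|a − b| ≤ r₁·φ(r₂·a) + P`, then for every `η > 0`,
`a ≤ (η/r₂)·(φ⁻¹)*((1+η)/η · r₁·r₂) + (1+η)·(b + P)`, where
`(φ⁻¹)*` is the convex conjugate of `φ⁻¹`. -/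
theorem self_bounding_risk_lemma
    (φ : ℝ → ℝ) (hφ0 : φ 0 = 0)
    (hφ_concave : ConcaveOn ℝ (Set.Ici (0 : ℝ)) φ)
    (hφ_mono : StrictMonoOn φ (Set.Ici (0 : ℝ)))
    (hφ_surj : ∀ y : ℝ, 0 ≤ y → ∃ x : ℝ, 0 ≤ x ∧ φ x = y)
    (ι : ℝ → ℝ)
    (hι_left : ∀ x : ℝ, 0 ≤ x → ι (φ x) = x)
    (hι_right : ∀ y : ℝ, 0 ≤ y → φ (ι y) = y)
    (conj : ℝ → ℝ)
    (hconj : ∀ u : ℝ, 0 ≤ u → IsLUB {z : ℝ | ∃ x > 0, z = x * u - ι x} (conj u))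
    (r₁ r₂ P : ℝ) (hr₁ : 0 < r₁) (hr₂ : 0 < r₂) (hP : 0 < P)
    (b : ℝ) (hb : 0 ≤ b) (a : ℝ) (ha : 0 ≤ a)
    (hineq : |a - b| ≤ r₁ * φ (r₂ * a) + P)
    (η : ℝ) (hη : 0 < η) :
    a ≤ (η / r₂) * conj ((1 + η) / η * (r₁ * r₂)) + (1 + η) * (b + P) := by
  have hφ_maps : Set.MapsTo φ (Set.Ici 0) (Set.Ici 0) := fun x hx =>
    hφ0.ge.trans (hφ_mono.monotoneOn Set.self_mem_Ici hx hx)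
  exact self_bounding_risk_lemma_general hφ0 hφ_maps hι_left hr₁.le hr₂ hη ha
    (hconj _ (by positivity)) (by linarith [le_of_abs_le hineq])
end

section
/- Let (a_k)_{k≥1} be a nonincreasing sequence of nonnegative real numbers with Σ_{k=1}^∞ a_k < ∞, and let N ∈ ℕ ∪ {∞}. Then the function v : [0,∞) → [0,∞), v(y) := ( Σ_{k=1}^N min{√y, a_k} )², is concave on [0,∞). -/
/-!
Expand the square into the double sum of the products `min (√y) (a i) * min (√y) (a j)`. All
factors being nonnegative, each product is the minimum of `y`, `√y * a j`, `a i * √y` and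
`a i * a j`, which are concave in `y ≥ 0`. Sums of concave functions are concave, and an infinite
sum is the pointwise limit of its finite partial sums.
-/

lemma concaveOn_finset_sum {𝕜 E β ι : Type*} [Semiring 𝕜] [PartialOrder 𝕜]
    [AddCommMonoid E] [SMul 𝕜 E] [AddCommMonoid β] [PartialOrder β] [IsOrderedAddMonoid β]
    [Module 𝕜 β] {s : Set E} {f : ι → E → β} {t : Finset ι} (hs : Convex 𝕜 s)
    (hf : ∀ i ∈ t, ConcaveOn 𝕜 s (f i)) : ConcaveOn 𝕜 s fun x => ∑ i ∈ t, f i x := by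
  simpa only [Finset.sum_fn] using
    Finset.sum_induction f (ConcaveOn 𝕜 s) (fun _ _ => ConcaveOn.add) (concaveOn_const 0 hs) hf

section OrderedSemiring

variable {𝕜 E ι : Type*} [CommSemiring 𝕜] [LinearOrder 𝕜] [IsStrictOrderedRing 𝕜]
  [AddCommMonoid E] [SMul 𝕜 E] {s : Set E}

lemma concaveOn_min_const_mul_min_const {f g : E → 𝕜} {b c : 𝕜}
    (hf : ConcaveOn 𝕜 s f) (hg : ConcaveOn 𝕜 s g) (hfg : ConcaveOn 𝕜 s fun x => f x * g x)
    (hf_nonneg : ∀ x ∈ s, 0 ≤ f x) (hg_nonneg : ∀ x ∈ s, 0 ≤ g x) (hb : 0 ≤ b) (hc : 0 ≤ c) :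
    ConcaveOn 𝕜 s fun x => min (f x) b * min (g x) c := by
  have hbc : ConcaveOn 𝕜 s fun _ => b * c := concaveOn_const _ hf.1
  refine ((hfg.inf (hf.smul hc)).inf ((hg.smul hb).inf hbc)).congr fun x hx => ?_
  calc
    min (min (f x * g x) (c * f x)) (min (b * g x) (b * c))
      = min (f x * min (g x) c) (b * min (g x) c) := by
        rw [mul_min_of_nonneg _ _ (hf_nonneg x hx), mul_min_of_nonneg _ _ hb, mul_comm c]
    _ = min (f x) b * min (g x) c :=
        (min_mul_of_nonneg _ _ (le_min (hg_nonneg x hx) hc)).symm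

lemma concaveOn_sq_finset_sum_of_concaveOn_mul {f : ι → E → 𝕜} {t : Finset ι}
    (hs : Convex 𝕜 s) (hf : ∀ i ∈ t, ∀ j ∈ t, ConcaveOn 𝕜 s fun x => f i x * f j x) :
    ConcaveOn 𝕜 s fun x => (∑ i ∈ t, f i x) ^ 2 := by
  simp only [sq, Finset.sum_mul_sum]
  exact concaveOn_finset_sum hs fun i hi => concaveOn_finset_sum hs (hf i hi)

lemma concaveOn_sq_of_hasSum_of_concaveOn_mul [TopologicalSpace 𝕜] [OrderClosedTopology 𝕜]
    [IsTopologicalSemiring 𝕜] {f : ι → E → 𝕜} {F : E → 𝕜} (hs : Convex 𝕜 s)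
    (hf : ∀ i j, ConcaveOn 𝕜 s fun x => f i x * f j x)
    (hF : ∀ x, HasSum (fun i => f i x) (F x)) :
    ConcaveOn 𝕜 s fun x => F x ^ 2 :=
  isClosed_setOfPred_concaveOn.mem_of_tendsto (tendsto_pi_nhds.2 fun x => (hF x).pow 2) <|
    .of_forall fun _ => concaveOn_sq_finset_sum_of_concaveOn_mul hs fun i _ j _ => hf i j

end OrderedSemiring

lemma concaveOn_min_sqrt_mul_min_sqrt {b c : ℝ} (hb : 0 ≤ b) (hc : 0 ≤ c) :
    ConcaveOn ℝ (Set.Ici 0) fun y => min (Real.sqrt y) b * min (Real.sqrt y) c := by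
  have hsqrt : ConcaveOn ℝ (Set.Ici 0) Real.sqrt := Real.strictConcaveOn_sqrt.concaveOn
  have hsqrt_mul_self : ConcaveOn ℝ (Set.Ici 0) fun y => Real.sqrt y * Real.sqrt y :=
    (concaveOn_id (convex_Ici 0)).congr fun _ hy => (Real.mul_self_sqrt hy).symm
  exact concaveOn_min_const_mul_min_const hsqrt hsqrt hsqrt_mul_self
    (fun y _ => Real.sqrt_nonneg y) (fun y _ => Real.sqrt_nonneg y) hb hc

lemma summable_min_const_left {ι : Type*} {a : ι → ℝ} {c : ℝ} (hc : 0 ≤ c)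
    (ha_nonneg : ∀ i, 0 ≤ a i) (ha_sum : Summable a) : Summable fun i => min c (a i) :=
  ha_sum.of_nonneg_of_le (fun i => le_min hc (ha_nonneg i)) fun _ => min_le_right _ _

theorem concaveOn_sq_sum_min_sqrt_general {ι : Type*} {a : ι → ℝ} (ha_nonneg : ∀ i, 0 ≤ a i)
    (ha_sum : Summable a) :
    ConcaveOn ℝ (Set.Ici 0) fun y => (∑' i, min (Real.sqrt y) (a i)) ^ 2 :=
  concaveOn_sq_of_hasSum_of_concaveOn_mul (convex_Ici 0)
    (fun i j => concaveOn_min_sqrt_mul_min_sqrt (ha_nonneg i) (ha_nonneg j))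
    fun y => (summable_min_const_left (Real.sqrt_nonneg y) ha_nonneg ha_sum).hasSum

/-- **Concavity of the squared truncated sum.**
For a nonincreasing nonnegative summable sequence `(a_k)_{k ≥ 1}` and `N ∈ ℕ ∪ {∞}`,
the map `y ↦ (∑_{k=1}^N min (√y) (a k))²` is concave on `[0,∞)`
(the case `N = ∞` being realized by the `tsum`). -/
theorem concaveOn_sq_sum_min_sqrt
    (a : ℕ → ℝ) (ha_nonneg : ∀ k, 0 ≤ a k)
    (ha_anti : ∀ k l, 1 ≤ k → k ≤ l → a l ≤ a k)
    (ha_sum : Summable (fun k => a (k + 1))) :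
    (∀ N : ℕ, ConcaveOn ℝ (Set.Ici (0 : ℝ))
        (fun y => (∑ k ∈ Finset.Icc 1 N, min (Real.sqrt y) (a k)) ^ 2)) ∧
      ConcaveOn ℝ (Set.Ici (0 : ℝ))
        (fun y => (∑' k : ℕ, min (Real.sqrt y) (a (k + 1))) ^ 2) := by
  refine ⟨fun N => ?_, concaveOn_sq_sum_min_sqrt_general (fun k => ha_nonneg (k + 1)) ha_sum⟩
  simpa only [← Finset.tsum_subtype] using concaveOn_sq_sum_min_sqrt_general
    (fun k : Finset.Icc 1 N => ha_nonneg k) Summable.of_finite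
end

section
/- For m ∈ ℕ define T^k : [0,∞) → ℝ by T^k(x) := min{x/2, 2^{1−2k} − x/2} for k ≥ 1, R^k := T^k ∘ T^{k−1} ∘ ⋯ ∘ T^1, and mult_m(x,y) := ( Σ_{k=1}^{m+1} [ R^k((x−y+1)/2) − R^k((x+y)/2) ] + (x+y)/2 − 1/4 )₊ for x, y ∈ [0,1], where (z)₊ := max{z,0}. Then: (a) for all x, y ∈ [0,1], |mult_m(x,y) − x·y| ≤ 2^{−m−1}·(x+y) ≤ 2^{−m}; (b) at every point (x,y) ∈ [0,1]² at which the partial derivative ∂₁mult_m(x,y) (respectively ∂₂mult_m(x,y)) exists, |∂₁mult_m(x,y) − y| ≤ 2^{−m−1} (respectively |∂₂mult_m(x,y) − x| ≤ 2^{−m−1}). -/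
/-- Triangle-wave building block `T^k(x) = min(x/2, 2^{1−2k} − x/2)`. -/
noncomputable def Tfun (k : ℕ) (x : ℝ) : ℝ :=
  min (x / 2) ((2 : ℝ) ^ (1 - 2 * (k : ℤ)) - x / 2)

/-- `R^k = T^k ∘ T^{k−1} ∘ ⋯ ∘ T^1` (with `R^0 = id`). -/
noncomputable def Rfun : ℕ → ℝ → ℝ
  | 0 => id
  | k + 1 => fun x => Tfun (k + 1) (Rfun k x)

/-- The piecewise linear approximation of the product of two numbers in `[0,1]`:
`mult_m(x,y) = ( ∑_{k=1}^{m+1} [R^k((x−y+1)/2) − R^k((x+y)/2)] + (x+y)/2 − 1/4 )₊`. -/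
noncomputable def multApprox (m : ℕ) (x y : ℝ) : ℝ :=
  max ((∑ k ∈ Finset.Icc 1 (m + 1),
      (Rfun k ((x - y + 1) / 2) - Rfun k ((x + y) / 2))) + (x + y) / 2 - 1 / 4) 0

/-!
Up to scaling, the triangle waves are the iterates of the tent map `τ` of `[0, 1]`:
`R^{k+1} = R^k ∘ τ / 4`. Since `x - x² = (τ x + (τ x - (τ x)²)) / 4`, the error
`E_n x = x - x² - ∑_{k=1}^n R^k x` obeys `E_{n+1} = E_n ∘ τ / 4`. As `τ` is `2`-Lipschitz and
preserves `[0, 1]`, this makes `E_n` a `2⁻ⁿ`-Lipschitz function on `[0, 1]`, and the symmetry of `τ`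
gives `E_{n+1} (1/2 + s) = E_{n+1} |s|` for `|s| ≤ 1/2`.

Put `v = (x + y) / 2` and `w = |x - y| / 2`, so that `v² - w² = x y` and `v - w = min x y`. The
expression inside the positive part of `mult_m` is then `x y + E_{m+1} v - E_{m+1} w`, and it is
nonnegative because `t ↦ t² + E_n t = t - ∑_{k=1}^n R^k t` is monotone. Both parts of the theorem
are now read off the Lipschitz bound for `E_{m+1}`.
-/

open Set Filter
open scoped NNReal Topology

theorem norm_le_of_hasDerivWithinAt_of_lipschitzOnWith {𝕜 F : Type*} [NontriviallyNormedField 𝕜]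
    [NormedAddCommGroup F] [NormedSpace 𝕜 F] {f : 𝕜 → F} {f' : F} {s : Set 𝕜} {x : 𝕜} {C : ℝ≥0}
    (hf : HasDerivWithinAt f f' s x) (hlip : LipschitzOnWith C f s) (hxs : x ∈ s)
    (hx : AccPt x (𝓟 s)) : ‖f'‖ ≤ C := by
  have : (𝓝[s \ {x}] x).NeBot := accPt_principal_iff_nhdsWithin.1 hx
  refine le_of_tendsto (hasDerivWithinAt_iff_tendsto_slope.1 hf).norm ?_
  filter_upwards [self_mem_nhdsWithin] with t ⟨hts, htx⟩
  have hpos : 0 < ‖t - x‖ := norm_pos_iff.2 (sub_ne_zero.2 htx)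
  rw [slope_def_module, norm_smul, norm_inv, inv_mul_le_iff₀ hpos, mul_comm]
  exact hlip.norm_sub_le hts hxs

theorem dist_div_const {K : Type*} [NormedDivisionRing K] (a b c : K) :
    dist (a / c) (b / c) = dist a b / ‖c‖ := by
  rw [dist_eq_norm, ← sub_div, norm_div, dist_eq_norm]

theorem half_add_sub_half_abs_sub {K : Type*} [Field K] [LinearOrder K] [IsStrictOrderedRing K]
    (x y : K) : (x + y) / 2 - |x - y| / 2 = min x y := by
  rw [inf_eq_half_smul_add_sub_abs_sub K, abs_sub_comm, smul_eq_mul, invOf_eq_inv]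
  ring

/-- The tent map of `[0, 1]`, of slope `2` on `[0, 1/2]` and `-2` on `[1/2, 1]`. -/
noncomputable def tentMap (x : ℝ) : ℝ := 1 - |2 * x - 1|

theorem tentMap_one_sub (x : ℝ) : tentMap (1 - x) = tentMap x := by
  rw [tentMap, tentMap, abs_sub_comm]
  ring_nf

theorem tentMap_of_le_half {x : ℝ} (hx : x ≤ 1 / 2) : tentMap x = 2 * x := by
  rw [tentMap, abs_of_nonpos (by linarith)]
  ring

theorem tentMap_half_add (s : ℝ) : tentMap (1 / 2 + s) = 1 - 2 * |s| := by
  rw [tentMap, show 2 * (1 / 2 + s) - 1 = 2 * s by ring, abs_mul, abs_two]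

theorem sub_sq_eq_tentMap (x : ℝ) :
    x - x ^ 2 = (tentMap x + (tentMap x - tentMap x ^ 2)) / 4 := by
  rw [tentMap]
  linear_combination (1 / 4 : ℝ) * sq_abs (2 * x - 1)

theorem mapsTo_tentMap_Icc : MapsTo tentMap (Icc 0 1) (Icc 0 1) := by
  rintro x ⟨hx0, hx1⟩
  have habs : |2 * x - 1| ≤ 1 := abs_le.2 ⟨by linarith, by linarith⟩
  exact ⟨sub_nonneg.2 habs, sub_le_self _ (abs_nonneg _)⟩

theorem lipschitzWith_tentMap : LipschitzWith 2 tentMap :=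
  LipschitzWith.of_dist_le_mul fun x y => by
    calc dist (tentMap x) (tentMap y)
        = |(|2 * x - 1| - |2 * y - 1|)| := dist_sub_left _ _ _
      _ ≤ |(2 * x - 1) - (2 * y - 1)| := abs_abs_sub_abs_le _ _
      _ = 2 * dist x y := by
        rw [sub_sub_sub_cancel_right, ← mul_sub, abs_mul, abs_two, Real.dist_eq]

theorem Tfun_one (x : ℝ) : Tfun 1 x = tentMap x / 4 := by
  rw [Tfun, tentMap, show (2 : ℝ) ^ (1 - 2 * ((1 : ℕ) : ℤ)) = 1 / 2 by norm_num]
  rcases le_total x (1 / 2) with hx | hx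
  · rw [min_eq_left (by linarith), abs_of_nonpos (by linarith)]
    ring
  · rw [min_eq_right (by linarith), abs_of_nonneg (by linarith)]
    ring

theorem Tfun_succ_div_four (k : ℕ) (x : ℝ) : Tfun (k + 1) (x / 4) = Tfun k x / 4 := by
  have hpow : (2 : ℝ) ^ (1 - 2 * ((k + 1 : ℕ) : ℤ)) = 2 ^ (1 - 2 * (k : ℤ)) / 4 := by
    rw [show 1 - 2 * ((k + 1 : ℕ) : ℤ) = 1 - 2 * (k : ℤ) - 2 by push_cast; ring,
      zpow_sub₀ two_ne_zero]
    norm_num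
  rw [Tfun, Tfun, hpow, ← min_div_div_right (by norm_num : (0 : ℝ) ≤ 4)]
  ring_nf

theorem Rfun_succ_eq_Rfun_tentMap (k : ℕ) (x : ℝ) :
    Rfun (k + 1) x = Rfun k (tentMap x) / 4 := by
  induction k with
  | zero => exact Tfun_one x
  | succ k ih =>
    change Tfun (k + 2) (Rfun (k + 1) x) = Tfun (k + 1) (Rfun k (tentMap x)) / 4
    rw [ih, Tfun_succ_div_four]

/-- The partial sum `∑_{k=1}^n R^k x`, which approximates `x - x²` on `[0, 1]`. -/
noncomputable def waveSum (n : ℕ) (x : ℝ) : ℝ := ∑ k ∈ Finset.Icc 1 n, Rfun k x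

theorem waveSum_succ (n : ℕ) (x : ℝ) :
    waveSum (n + 1) x = (tentMap x + waveSum n (tentMap x)) / 4 := by
  induction n with
  | zero => simp [waveSum, Rfun, Tfun_one]
  | succ n ih =>
    have sum_succ (j : ℕ) (z : ℝ) : waveSum (j + 1) z = waveSum j z + Rfun (j + 1) z :=
      Finset.sum_Icc_succ_top (by lia) _
    rw [sum_succ, ih, sum_succ, Rfun_succ_eq_Rfun_tentMap (n + 1)]
    ring

theorem waveSum_one_sub (n : ℕ) (x : ℝ) : waveSum n (1 - x) = waveSum n x := by
  cases n with
  | zero => rfl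
  | succ n => rw [waveSum_succ, waveSum_succ, tentMap_one_sub]

theorem lipschitzWith_waveSum (n : ℕ) : LipschitzWith 1 (waveSum n) := by
  induction n with
  | zero => exact LipschitzWith.const' 0
  | succ n ih =>
    refine LipschitzWith.mk_one fun x y => ?_
    have hsum : dist (tentMap x + waveSum n (tentMap x)) (tentMap y + waveSum n (tentMap y)) ≤
        (1 + 1) * (2 * dist x y) :=
      ((LipschitzWith.id.add ih).comp lipschitzWith_tentMap).dist_le_mul x y |>.trans_eq
        (by push_cast; ring)
    rw [waveSum_succ, waveSum_succ, dist_div_const, Real.norm_ofNat]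
    linarith

theorem monotone_sub_waveSum (n : ℕ) : Monotone fun x => x - waveSum n x := by
  intro x y hxy
  have hlip := (lipschitzWith_waveSum n).le_add_mul y x
  rw [Real.dist_eq, abs_of_nonneg (sub_nonneg.2 hxy), NNReal.coe_one] at hlip
  change x - waveSum n x ≤ y - waveSum n y
  linarith

/-- The error `E_n x` of `waveSum n` as an approximation of `x - x²`. -/
noncomputable def waveError (n : ℕ) (x : ℝ) : ℝ := x - x ^ 2 - waveSum n x

theorem waveError_succ (n : ℕ) (x : ℝ) : waveError (n + 1) x = waveError n (tentMap x) / 4 := by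
  rw [waveError, waveError, waveSum_succ, sub_sq_eq_tentMap]
  ring

theorem waveError_one_sub (n : ℕ) (x : ℝ) : waveError n (1 - x) = waveError n x := by
  rw [waveError, waveError, waveSum_one_sub]
  ring

theorem waveError_succ_half_add (n : ℕ) {s : ℝ} (hs : |s| ≤ 1 / 2) :
    waveError (n + 1) (1 / 2 + s) = waveError (n + 1) |s| := by
  rw [waveError_succ, waveError_succ, tentMap_half_add, tentMap_of_le_half hs, waveError_one_sub]

theorem lipschitzOnWith_sub_sq_Icc : LipschitzOnWith 1 (fun x : ℝ => x - x ^ 2) (Icc 0 1) := by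
  refine LipschitzOnWith.of_dist_le_mul fun x ⟨hx0, hx1⟩ y ⟨hy0, hy1⟩ => ?_
  have hslope : |1 - x - y| ≤ 1 := abs_le.2 ⟨by linarith, by linarith⟩
  calc |x - x ^ 2 - (y - y ^ 2)| = |1 - x - y| * |x - y| := by rw [← abs_mul]; ring_nf
    _ ≤ 1 * |x - y| := by gcongr

theorem lipschitzOnWith_waveError (n : ℕ) :
    LipschitzOnWith (2⁻¹ ^ n) (waveError n) (Icc 0 1) := by
  induction n with
  | zero =>
    rw [pow_zero, show waveError 0 = fun x => x - x ^ 2 from funext fun x => sub_zero _]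
    exact lipschitzOnWith_sub_sq_Icc
  | succ n ih =>
    refine LipschitzOnWith.of_dist_le_mul fun x hx y hy => ?_
    have hcomp := (ih.comp lipschitzWith_tentMap.lipschitzOnWith mapsTo_tentMap_Icc).dist_le_mul
      x hx y hy
    calc dist (waveError (n + 1) x) (waveError (n + 1) y)
        = dist (waveError n (tentMap x)) (waveError n (tentMap y)) / 4 := by
          rw [waveError_succ, waveError_succ, dist_div_const, Real.norm_ofNat]
      _ ≤ ↑(2⁻¹ ^ n * 2 : ℝ≥0) * dist x y / 4 := by gcongr; exact hcomp
      _ = ↑(2⁻¹ ^ (n + 1) : ℝ≥0) * dist x y := by push_cast; ring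

theorem multApprox_eq_waveSum (m : ℕ) (x y : ℝ) :
    multApprox m x y = max (waveSum (m + 1) (1 / 2 + (x - y) / 2) - waveSum (m + 1) ((x + y) / 2) +
      (x + y) / 2 - 1 / 4) 0 := by
  rw [multApprox, Finset.sum_sub_distrib, show (x - y + 1) / 2 = 1 / 2 + (x - y) / 2 by ring]
  rfl

theorem multApprox_comm (m : ℕ) (x y : ℝ) : multApprox m x y = multApprox m y x := by
  rw [multApprox_eq_waveSum, multApprox_eq_waveSum, ← waveSum_one_sub _ (1 / 2 + (x - y) / 2),
    show 1 - (1 / 2 + (x - y) / 2) = 1 / 2 + (y - x) / 2 by ring, add_comm x y]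

section UnitSquare

variable {x y : ℝ}

theorem half_add_mem_Icc (hx : x ∈ Icc (0 : ℝ) 1) (hy : y ∈ Icc (0 : ℝ) 1) :
    (x + y) / 2 ∈ Icc (0 : ℝ) 1 :=
  ⟨by linarith [hx.1, hy.1], by linarith [hx.2, hy.2]⟩

theorem half_abs_sub_mem_Icc (hx : x ∈ Icc (0 : ℝ) 1) (hy : y ∈ Icc (0 : ℝ) 1) :
    |x - y| / 2 ∈ Icc (0 : ℝ) (1 / 2) := by
  have habs : |x - y| ≤ 1 := abs_le.2 ⟨by linarith [hx.1, hy.2], by linarith [hx.2, hy.1]⟩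
  exact ⟨by positivity, by linarith⟩

theorem multApprox_sub_mul (m : ℕ) (hx : x ∈ Icc (0 : ℝ) 1) (hy : y ∈ Icc (0 : ℝ) 1) :
    multApprox m x y - x * y =
      waveError (m + 1) ((x + y) / 2) - waveError (m + 1) (|x - y| / 2) := by
  have habs : |(x - y) / 2| = |x - y| / 2 := by rw [abs_div, abs_two]
  have hshift : waveError (m + 1) (1 / 2 + (x - y) / 2) = waveError (m + 1) (|x - y| / 2) := by
    rw [waveError_succ_half_add m (habs ▸ (half_abs_sub_mem_Icc hx hy).2), habs]
  have hinner : waveSum (m + 1) (1 / 2 + (x - y) / 2) - waveSum (m + 1) ((x + y) / 2) +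
      (x + y) / 2 - 1 / 4 =
        x * y + (waveError (m + 1) ((x + y) / 2) - waveError (m + 1) (|x - y| / 2)) := by
    rw [← hshift, waveError, waveError]
    ring
  have hmono : |x - y| / 2 - waveSum (m + 1) (|x - y| / 2) ≤
      (x + y) / 2 - waveSum (m + 1) ((x + y) / 2) :=
    monotone_sub_waveSum (m + 1) <| sub_nonneg.1 <|
      half_add_sub_half_abs_sub x y ▸ le_min hx.1 hy.1
  have hnonneg : 0 ≤
      x * y + (waveError (m + 1) ((x + y) / 2) - waveError (m + 1) (|x - y| / 2)) := by
    rw [waveError, waveError]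
    linarith [sq_abs (x - y)]
  rw [multApprox_eq_waveSum, hinner, max_eq_left hnonneg, add_sub_cancel_left]

theorem abs_multApprox_sub_mul_le (m : ℕ) (hx : x ∈ Icc (0 : ℝ) 1) (hy : y ∈ Icc (0 : ℝ) 1) :
    |multApprox m x y - x * y| ≤ 2⁻¹ ^ (m + 1) * min x y := by
  have hw := Icc_subset_Icc_right one_half_lt_one.le (half_abs_sub_mem_Icc hx hy)
  have hlip := (lipschitzOnWith_waveError (m + 1)).dist_le_mul _ (half_add_mem_Icc hx hy) _ hw
  rw [multApprox_sub_mul m hx hy]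
  simpa [Real.dist_eq, half_add_sub_half_abs_sub, abs_of_nonneg (le_min hx.1 hy.1)] using hlip

theorem lipschitzOnWith_multApprox_sub_mul (m : ℕ) (hy : y ∈ Icc (0 : ℝ) 1) :
    LipschitzOnWith (2⁻¹ ^ (m + 1)) (fun x => multApprox m x y - x * y) (Icc 0 1) := by
  have hsum : LipschitzWith 2⁻¹ fun x => (x + y) / 2 :=
    LipschitzWith.of_dist_le_mul fun a b => by
      simp [dist_div_const, inv_mul_eq_div]
  have hdiff : LipschitzWith 2⁻¹ fun x => |x - y| / 2 :=
    LipschitzWith.of_dist_le_mul fun a b => by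
      rw [dist_div_const, Real.norm_ofNat, div_eq_inv_mul]
      simpa [Real.dist_eq] using abs_abs_sub_abs_le (a - y) (b - y)
  have hE := lipschitzOnWith_waveError (m + 1)
  have herr := (hE.comp hsum.lipschitzOnWith fun x hx => half_add_mem_Icc hx hy).sub
    (hE.comp hdiff.lipschitzOnWith fun x hx =>
      Icc_subset_Icc_right one_half_lt_one.le (half_abs_sub_mem_Icc hx hy))
  rw [← mul_add, ← two_mul, mul_inv_cancel₀ two_ne_zero, mul_one] at herr
  intro a ha b hb
  simp only [multApprox_sub_mul m ha hy, multApprox_sub_mul m hb hy]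
  exact herr ha hb

theorem abs_sub_le_of_hasDerivWithinAt_multApprox {m : ℕ} {d : ℝ} (hx : x ∈ Icc (0 : ℝ) 1)
    (hy : y ∈ Icc (0 : ℝ) 1) (hd : HasDerivWithinAt (fun t => multApprox m t y) d (Icc 0 1) x) :
    |d - y| ≤ 2⁻¹ ^ (m + 1) := by
  have herr : HasDerivWithinAt (fun t => multApprox m t y - t * y) (d - y) (Icc 0 1) x := by
    simpa using hd.fun_sub ((hasDerivWithinAt_id x _).mul_const y)
  simpa using norm_le_of_hasDerivWithinAt_of_lipschitzOnWith herr
    (lipschitzOnWith_multApprox_sub_mul m hy) hx (uniqueDiffOn_Icc_zero_one x hx).accPt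

end UnitSquare

/-- **Approximate multiplication and its partial derivatives.**
(a) For `x, y ∈ [0,1]`, `|mult_m(x,y) − x·y| ≤ 2^{−m−1}(x+y) ≤ 2^{−m}`.
(b) Wherever the partial derivative of `mult_m` in the first (resp. second)
argument exists, it is within `2^{−m−1}` of `y` (resp. `x`). -/
theorem multApprox_properties (m : ℕ) :
    (∀ x ∈ Set.Icc (0 : ℝ) 1, ∀ y ∈ Set.Icc (0 : ℝ) 1,
      |multApprox m x y - x * y| ≤ (2 : ℝ) ^ (-(m : ℤ) - 1) * (x + y) ∧
        |multApprox m x y - x * y| ≤ (2 : ℝ) ^ (-(m : ℤ))) ∧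
    (∀ x ∈ Set.Icc (0 : ℝ) 1, ∀ y ∈ Set.Icc (0 : ℝ) 1, ∀ d : ℝ,
      HasDerivAt (fun t => multApprox m t y) d x →
        |d - y| ≤ (2 : ℝ) ^ (-(m : ℤ) - 1)) ∧
    (∀ x ∈ Set.Icc (0 : ℝ) 1, ∀ y ∈ Set.Icc (0 : ℝ) 1, ∀ d : ℝ,
      HasDerivAt (fun t => multApprox m x t) d y →
        |d - x| ≤ (2 : ℝ) ^ (-(m : ℤ) - 1)) := by
  have hpow : (2 : ℝ) ^ (-(m : ℤ) - 1) = 2⁻¹ ^ (m + 1) := by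
    rw [← neg_add', zpow_neg, ← inv_zpow]
    exact zpow_natCast _ (m + 1)
  have hpow_two : (2 : ℝ) ^ (-(m : ℤ)) = 2⁻¹ ^ (m + 1) * 2 := by
    rw [← hpow, ← zpow_add_one₀ two_ne_zero, sub_add_cancel]
  rw [hpow, hpow_two]
  refine ⟨fun x hx y hy => ?_, fun x hx y hy d hd => ?_, fun x hx y hy d hd => ?_⟩
  · have hbound := abs_multApprox_sub_mul_le m hx hy
    constructor <;> refine hbound.trans (mul_le_mul_of_nonneg_left ?_ (by positivity))
    · exact (min_le_left x y).trans (le_add_of_nonneg_right hy.1)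
    · exact (min_le_left x y).trans (hx.2.trans one_le_two)
  · exact abs_sub_le_of_hasDerivWithinAt_multApprox hx hy hd.hasDerivWithinAt
  · simp only [multApprox_comm m x] at hd
    exact abs_sub_le_of_hasDerivWithinAt_multApprox hy hx hd.hasDerivWithinAt
end

section
/- Let β : ℕ₀ → [0,1] be nonincreasing and submultiplicative in the sense that β(q₁·q₂) ≤ C_{β,sub}·β(q₁)·β(q₂) for all q₁, q₂ ∈ ℕ₀, for some constant C_{β,sub} > 0. For r ∈ ℕ₀ define β̃(k) := β((k − r) ∨ 0), where (a ∨ b) := max{a,b} and subtraction is truncated at 0. Then for all q₁, q₂ ∈ ℕ₀, β̃(q₁·q₂) ≤ C_{β,sub}·β̃(q₁)·β̃(q₂). (The proof rests on the elementary inequality ((q₁−r) ∨ 0)·((q₂−r) ∨ 0) ≤ (q₁·q₂ − r) ∨ 0 for natural numbers q₁, q₂, r.) -/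
/-!
Truncated subtraction satisfies `(a - c) * (b - d) ≤ a * b - c * d`. Taking `c = d = r` in `ℕ`,
where `r ≤ r * r`, gives `(q₁ - r) * (q₂ - r) ≤ q₁ * q₂ - r`. Since `β` is nonincreasing,
`β (q₁ * q₂ - r) ≤ β ((q₁ - r) * (q₂ - r))`, and submultiplicativity of `β` bounds the right side.
-/

theorem tsub_mul_tsub_le_mul_tsub_mul {R : Type*} [CommSemiring R] [LinearOrder R]
    [CanonicallyOrderedAdd R] [Sub R] [OrderedSub R] [AddLeftReflectLE R] (a b c d : R) :
    (a - c) * (b - d) ≤ a * b - c * d := by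
  rcases le_total b d with hbd | hdb
  · simp [tsub_eq_zero_of_le hbd]
  calc
    (a - c) * (b - d) ≤ (a - c) * b := by gcongr; exact tsub_le_self
    _ = a * b - c * b := tsub_mul a c b
    _ ≤ a * b - c * d := by gcongr

theorem nat_sub_mul_sub_le_mul_sub (q₁ q₂ r : ℕ) : (q₁ - r) * (q₂ - r) ≤ q₁ * q₂ - r :=
  (tsub_mul_tsub_le_mul_tsub_mul q₁ q₂ r r).trans
    (Nat.sub_le_sub_left (Nat.le_mul_self r) (q₁ * q₂))

theorem lagged_beta_submultiplicative_general {α : Type*} [Preorder α] [Mul α]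
    {β : ℕ → α} (hβ_anti : Antitone β) {C : α}
    (hsub : ∀ q₁ q₂ : ℕ, β (q₁ * q₂) ≤ C * (β q₁ * β q₂)) (r q₁ q₂ : ℕ) :
    β (q₁ * q₂ - r) ≤ C * (β (q₁ - r) * β (q₂ - r)) :=
  calc
    β (q₁ * q₂ - r) ≤ β ((q₁ - r) * (q₂ - r)) := hβ_anti (nat_sub_mul_sub_le_mul_sub q₁ q₂ r)
    _ ≤ C * (β (q₁ - r) * β (q₂ - r)) := hsub (q₁ - r) (q₂ - r)

/-- **Lagged mixing coefficients inherit submultiplicativity.**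
If `β : ℕ → [0,1]` is nonincreasing and submultiplicative with constant `C_{β,sub}`,
then the lagged sequence `β̃ k := β ((k - r) ⊔ 0)` (truncated subtraction in `ℕ`)
is submultiplicative with the same constant. -/
theorem lagged_beta_submultiplicative
    (β : ℕ → ℝ) (hβ_anti : Antitone β) (hβ_mem : ∀ k, β k ∈ Set.Icc (0 : ℝ) 1)
    (Csub : ℝ) (hCsub : 0 < Csub)
    (hsub : ∀ q₁ q₂ : ℕ, β (q₁ * q₂) ≤ Csub * (β q₁ * β q₂))
    (r : ℕ) :
    ∀ q₁ q₂ : ℕ, β (q₁ * q₂ - r) ≤ Csub * (β (q₁ - r) * β (q₂ - r)) :=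
  lagged_beta_submultiplicative_general hβ_anti hsub r
end
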